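/- arXiv:1904.10919 — 3 statements merged into one kernel-verified Lean document; each statement's English description precedes it below -/
import Mathlib

section
/- Let n ≥ 4, let A be the Cartan matrix of type D_n, and let ι be an admissible sequence in I = {1,…,n} adapted to A. Then Ξ_ι = Tab_{D,ι}, i.e. the set of all linear forms obtained by applying finitely many operators S_k to the coordinate functions x_{j_0} coincides exactly with the set of column tableaux of type D. -/
noncomputable section

/-- The coordinate linear form `x_k` (as a coefficient vector). -/
def xc (k : ℕ) : ℕ → ℚ := fun l => if l = k then 1 else 0

/-- Cartan matrix of type `A_n`. -/
def cartanA (_n : ℕ) (i j : ℕ) : ℤ :=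
  if i = j then 2 else if i + 1 = j ∨ j + 1 = i then -1 else 0

/-- Cartan matrix of type `B_n`. -/
def cartanB (n : ℕ) (i j : ℕ) : ℤ :=
  if i = j then 2
  else if i = n ∧ j = n - 1 then -2
  else if i + 1 = j ∨ j + 1 = i then -1 else 0

/-- Cartan matrix of type `C_n`. -/
def cartanC (n : ℕ) (i j : ℕ) : ℤ :=
  if i = j then 2
  else if i = n - 1 ∧ j = n then -2
  else if i + 1 = j ∨ j + 1 = i then -1 else 0

/-- Cartan matrix of type `D_n`. -/
def cartanD (n : ℕ) (i j : ℕ) : ℤ :=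
  if i = j then 2
  else if (i = n - 1 ∧ j = n) ∨ (i = n ∧ j = n - 1) then 0
  else if (i + 1 = j ∨ j + 1 = i) ∨ (i = n ∧ j = n - 2) ∨ (i = n - 2 ∧ j = n) then -1
  else 0

/-- `ι` (with positions indexed by `k ≥ 1`) takes values in `{1,…,n}`, has no two equal
consecutive entries, and every index occurs infinitely often. -/
def Admissible (n : ℕ) (ι : ℕ → ℕ) : Prop :=
  (∀ k, 1 ≤ k → 1 ≤ ι k ∧ ι k ≤ n) ∧
  (∀ k, 1 ≤ k → ι k ≠ ι (k + 1)) ∧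
  (∀ i, 1 ≤ i → i ≤ n → ∀ N, ∃ k, N ≤ k ∧ ι k = i)

/-- `k^+`: the next position after `k` carrying the same letter. -/
def kplus (ι : ℕ → ℕ) (k : ℕ) : ℕ := sInf {l | k < l ∧ ι l = ι k}

/-- `k^-`: the previous position (`≥ 1`) carrying the same letter, `0` if none. -/
def kminus (ι : ℕ → ℕ) (k : ℕ) : ℕ := sSup {l | 0 < l ∧ l < k ∧ ι l = ι k}

/-- The linear form `β_k` (with `β_0 = 0`). -/
def beta (A : ℕ → ℕ → ℤ) (ι : ℕ → ℕ) (k : ℕ) : ℕ → ℚ :=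
  if k = 0 then 0
  else xc k + (∑ j ∈ Finset.Ioo k (kplus ι k), (A (ι k) (ι j) : ℚ) • xc j) + xc (kplus ι k)

/-- The piecewise-linear operator `S_k`. -/
def Sop (A : ℕ → ℕ → ℤ) (ι : ℕ → ℕ) (k : ℕ) (φ : ℕ → ℚ) : ℕ → ℚ :=
  if 0 < φ k then φ - φ k • beta A ι k
  else φ - φ k • beta A ι (kminus ι k)

/-- Membership in `Ξ_ι`: forms obtained from some `x_{j_0}` by finitely many operators `S_k`. -/
inductive XiMem (A : ℕ → ℕ → ℤ) (ι : ℕ → ℕ) : (ℕ → ℚ) → Prop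
  | base (k : ℕ) (hk : 1 ≤ k) : XiMem A ι (xc k)
  | step (k : ℕ) (hk : 1 ≤ k) (φ : ℕ → ℚ) (h : XiMem A ι φ) : XiMem A ι (Sop A ι k φ)

/-- The set `Ξ_ι`. -/
def Xi (A : ℕ → ℕ → ℤ) (ι : ℕ → ℕ) : Set (ℕ → ℚ) := { φ | XiMem A ι φ }

/-- Forms obtained from a set `g` of generators by finitely many operators `S_k`. -/
inductive XiMemFrom (A : ℕ → ℕ → ℤ) (ι : ℕ → ℕ) (g : Set (ℕ → ℚ)) : (ℕ → ℚ) → Prop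
  | base (φ : ℕ → ℚ) (h : φ ∈ g) : XiMemFrom A ι g φ
  | step (k : ℕ) (hk : 1 ≤ k) (φ : ℕ → ℚ) (h : XiMemFrom A ι g φ) :
      XiMemFrom A ι g (Sop A ι k φ)

/-- `ι` is adapted to the Cartan matrix `A`: for `i ≠ j` with `a_{i,j} ≠ 0`, consecutive
members of the subsequence of `ι` consisting of the letters `i`, `j` are distinct. -/
def Adapted (n : ℕ) (A : ℕ → ℕ → ℤ) (ι : ℕ → ℕ) : Prop :=
  ∀ i j, 1 ≤ i → i ≤ n → 1 ≤ j → j ≤ n → i ≠ j → A i j ≠ 0 →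
    ∀ k l, 1 ≤ k → k < l → (ι k = i ∨ ι k = j) → (ι l = i ∨ ι l = j) →
      (∀ m, k < m → m < l → ι m ≠ i ∧ ι m ≠ j) → ι k ≠ ι l

/-- Position of the first occurrence of the letter `i` in `ι`. -/
def firstOcc (ι : ℕ → ℕ) (i : ℕ) : ℕ := sInf {k | 1 ≤ k ∧ ι k = i}

/-- `p_{i,j} = 1` iff the first occurrence of `i` precedes the first occurrence of `j`. -/
def pval (ι : ℕ → ℕ) (i j : ℕ) : ℕ := if firstOcc ι i < firstOcc ι j then 1 else 0

/-- The function `P(k)` for types A, B, C (and `P(k) = 0` for `k > n`, `k ≤ 1`). -/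
def PABC (ι : ℕ → ℕ) (n k : ℕ) : ℕ :=
  if k ≤ n then ∑ t ∈ Finset.Icc 2 k, pval ι t (t - 1) else 0

/-- The function `P(k)` for type D. -/
def PD (ι : ℕ → ℕ) (n k : ℕ) : ℕ :=
  if k = n then (∑ t ∈ Finset.Icc 2 (n - 2), pval ι t (t - 1)) + pval ι n (n - 2)
  else if k ≤ n then ∑ t ∈ Finset.Icc 2 k, pval ι t (t - 1) else 0

/-- `occPos ι j s`: the position of the `s`-th occurrence of the letter `j` in `ι`
(`0` for `s = 0`). -/
def occPos (ι : ℕ → ℕ) (j : ℕ) : ℕ → ℕ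
  | 0 => 0
  | s + 1 => sInf {k | occPos ι j s < k ∧ ι k = j}

/-- The double-indexed coordinate form `x_{s,j}`, with the conventions
`x_{s,0} = x_{s,n+1} = 0` and `x_{s,j} = 0` for `s ≤ 0`. -/
def xsj (ι : ℕ → ℕ) (n : ℕ) (s : ℤ) (j : ℕ) : ℕ → ℚ :=
  if 1 ≤ s ∧ 1 ≤ j ∧ j ≤ n then xc (occPos ι j s.toNat) else 0

/-- The double-indexed form `β_{s,j}`. -/
def betasj (A : ℕ → ℕ → ℤ) (ι : ℕ → ℕ) (s : ℤ) (j : ℕ) : ℕ → ℚ :=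
  beta A ι (occPos ι j s.toNat)

/-- The double-indexed operator `S_{m,j}`. -/
def Ssj (A : ℕ → ℕ → ℤ) (ι : ℕ → ℕ) (m j : ℕ) (φ : ℕ → ℚ) : ℕ → ℚ :=
  Sop A ι (occPos ι j m) φ

/- Entries of the ordered sets `J_X` are encoded as natural numbers:
an unbarred entry `j ∈ {1,…,n}` is encoded as `j`, a barred entry `j̄` is
encoded as `2n+1-j` (so that `n̄ = n+1, …, 1̄ = 2n` and the total order of
`J_B = J_C` is the numerical order), and the extra symbol `ovl(n+1)` of
types C and D is encoded as `0`. -/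

/-- The box of type A. -/
def boxA (ι : ℕ → ℕ) (n : ℕ) (s : ℤ) (j : ℕ) : ℕ → ℚ :=
  xsj ι n (s + (PABC ι n j : ℤ)) j - xsj ι n (s + (PABC ι n (j - 1) : ℤ) + 1) (j - 1)

/-- The box of type B. -/
def boxB (ι : ℕ → ℕ) (n : ℕ) (s : ℤ) (e : ℕ) : ℕ → ℚ :=
  if e ≤ n then
    xsj ι n (s + (PABC ι n e : ℤ)) e - xsj ι n (s + (PABC ι n (e - 1) : ℤ) + 1) (e - 1)
  else
    xsj ι n (s + (PABC ι n (2 * n - e) : ℤ) + (n : ℤ) - ((2 * n + 1 - e : ℕ) : ℤ) + 1)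
        (2 * n - e)
      - xsj ι n (s + (PABC ι n (2 * n + 1 - e) : ℤ) + (n : ℤ) - ((2 * n + 1 - e : ℕ) : ℤ) + 1)
          (2 * n + 1 - e)

/-- The box of type C (`ovl(n+1)` encoded as `0`). -/
def boxC (ι : ℕ → ℕ) (n : ℕ) (s : ℤ) (e : ℕ) : ℕ → ℚ :=
  if e = 0 then xsj ι n (s + (PABC ι n n : ℤ)) n
  else if e < n then
    xsj ι n (s + (PABC ι n e : ℤ)) e - xsj ι n (s + (PABC ι n (e - 1) : ℤ) + 1) (e - 1)
  else if e = n then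
    (2 : ℚ) • xsj ι n (s + (PABC ι n n : ℤ)) n
      - xsj ι n (s + (PABC ι n (n - 1) : ℤ) + 1) (n - 1)
  else if e = n + 1 then
    xsj ι n (s + (PABC ι n (n - 1) : ℤ) + 1) (n - 1)
      - (2 : ℚ) • xsj ι n (s + (PABC ι n n : ℤ) + 1) n
  else
    xsj ι n (s + (PABC ι n (2 * n - e) : ℤ) + (n : ℤ) - ((2 * n + 1 - e : ℕ) : ℤ) + 1)
        (2 * n - e)
      - xsj ι n (s + (PABC ι n (2 * n + 1 - e) : ℤ) + (n : ℤ) - ((2 * n + 1 - e : ℕ) : ℤ) + 1)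
          (2 * n + 1 - e)

/-- The box of type D (`ovl(n+1)` encoded as `0`, `n̄` as `n+1`, `ovl(n-1)` as `n+2`). -/
def boxD (ι : ℕ → ℕ) (n : ℕ) (s : ℤ) (e : ℕ) : ℕ → ℚ :=
  if e = 0 then xsj ι n (s + (PD ι n n : ℤ)) n
  else if e ≤ n - 2 then
    xsj ι n (s + (PD ι n e : ℤ)) e - xsj ι n (s + (PD ι n (e - 1) : ℤ) + 1) (e - 1)
  else if e = n - 1 then
    xsj ι n (s + (PD ι n (n - 1) : ℤ)) (n - 1) + xsj ι n (s + (PD ι n n : ℤ)) n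
      - xsj ι n (s + (PD ι n (n - 2) : ℤ) + 1) (n - 2)
  else if e = n then
    xsj ι n (s + (PD ι n n : ℤ)) n - xsj ι n (s + (PD ι n (n - 1) : ℤ) + 1) (n - 1)
  else if e = n + 1 then
    xsj ι n (s + (PD ι n (n - 1) : ℤ)) (n - 1) - xsj ι n (s + (PD ι n n : ℤ) + 1) n
  else if e = n + 2 then
    xsj ι n (s + (PD ι n (n - 2) : ℤ) + 1) (n - 2)
      - xsj ι n (s + (PD ι n (n - 1) : ℤ) + 1) (n - 1)
      - xsj ι n (s + (PD ι n n : ℤ) + 1) n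
  else
    xsj ι n (s + (PD ι n (2 * n - e) : ℤ) + (n : ℤ) - ((2 * n + 1 - e : ℕ) : ℤ)) (2 * n - e)
      - xsj ι n (s + (PD ι n (2 * n + 1 - e) : ℤ) + (n : ℤ) - ((2 * n + 1 - e : ℕ) : ℤ))
          (2 * n + 1 - e)

/-- The column tableau `[j_1,…,j_k]_s = Σ_{i=1}^k box_{s+k-i}(j_i)`. -/
def tab (box : ℤ → ℕ → ℕ → ℚ) (s : ℤ) (k : ℕ) (j : ℕ → ℕ) : ℕ → ℚ :=
  ∑ i ∈ Finset.Icc 1 k, box (s + (k : ℤ) - (i : ℤ)) (j i)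

/-- The set `Tab_{A,ι}`. -/
def TabA (ι : ℕ → ℕ) (n : ℕ) : Set (ℕ → ℚ) :=
  { T | ∃ (k : ℕ) (s : ℤ) (j : ℕ → ℕ),
      1 ≤ k ∧ k ≤ n ∧
      (∀ i, 1 ≤ i → i ≤ k → 1 ≤ j i ∧ j i ≤ n + 1) ∧
      (∀ i, 1 ≤ i → i < k → j i < j (i + 1)) ∧
      1 - (PABC ι n k : ℤ) ≤ s ∧
      T = tab (boxA ι n) s k j }

/-- `|·|` on encoded entries of `J_B = J_C`. -/
def absJ (n e : ℕ) : ℕ := if e ≤ n then e else 2 * n + 1 - e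

/-- The set `Tab_{B,ι}`. -/
def TabB (ι : ℕ → ℕ) (n : ℕ) : Set (ℕ → ℚ) :=
  { T | ∃ (k : ℕ) (s : ℤ) (j : ℕ → ℕ),
      1 ≤ k ∧ k ≤ n ∧
      (∀ i, 1 ≤ i → i ≤ k → 1 ≤ j i ∧ j i ≤ 2 * n) ∧
      (∀ i, 1 ≤ i → i < k → j i < j (i + 1)) ∧
      (k = n → ∀ l m, 1 ≤ l → l < m → m ≤ k → absJ n (j l) ≠ absJ n (j m)) ∧
      1 - (PABC ι n k : ℤ) ≤ s ∧
      T = tab (boxB ι n) s k j }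

/-- Defining conditions of `Tab_{C,ι}` on the data `(k,s,j)`. -/
def TabCcond (ι : ℕ → ℕ) (n : ℕ) (k : ℕ) (s : ℤ) (j : ℕ → ℕ) : Prop :=
  (1 ≤ k ∧ k ≤ n - 1 ∧
    (∀ i, 1 ≤ i → i ≤ k → 1 ≤ j i ∧ j i ≤ 2 * n) ∧
    (∀ i, 1 ≤ i → i < k → j i < j (i + 1)) ∧
    1 - (PABC ι n k : ℤ) ≤ s)
  ∨
  (j 1 = 0 ∧ 1 ≤ k ∧ k ≤ n + 1 ∧
    (∀ i, 2 ≤ i → i ≤ k → n + 1 ≤ j i ∧ j i ≤ 2 * n) ∧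
    (∀ i, 2 ≤ i → i < k → j i < j (i + 1)) ∧
    1 - (PABC ι n n : ℤ) ≤ s)

/-- The set `Tab_{C,ι}`. -/
def TabC (ι : ℕ → ℕ) (n : ℕ) : Set (ℕ → ℚ) :=
  { T | ∃ k s j, TabCcond ι n k s j ∧ T = tab (boxC ι n) s k j }

/-- The partial order on (encoded) `J_D`: `a ≤ b` iff `a = b`, or `a < b` numerically and
`(a,b)` is not the incomparable pair `(n, n̄)`. -/
def leD (n a b : ℕ) : Prop := a = b ∨ (a < b ∧ ¬(a = n ∧ b = n + 1))

/-- Defining conditions of `Tab_{D,ι}` on the data `(k,s,j)`. -/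
def TabDcond (ι : ℕ → ℕ) (n : ℕ) (k : ℕ) (s : ℤ) (j : ℕ → ℕ) : Prop :=
  (1 ≤ k ∧ k ≤ n - 2 ∧
    (∀ i, 1 ≤ i → i ≤ k → 1 ≤ j i ∧ j i ≤ 2 * n) ∧
    (∀ i, 1 ≤ i → i < k → ¬ leD n (j (i + 1)) (j i)) ∧
    1 - (PD ι n k : ℤ) ≤ s)
  ∨
  (j 1 = 0 ∧ 1 ≤ k ∧ k ≤ n + 1 ∧
    (∀ i, 2 ≤ i → i ≤ k → n + 1 ≤ j i ∧ j i ≤ 2 * n) ∧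
    (∀ i, 2 ≤ i → i < k → j i < j (i + 1)) ∧
    (k % 2 = 0 → 1 - (PD ι n (n - 1) : ℤ) ≤ s) ∧
    (k % 2 = 1 → 1 - (PD ι n n : ℤ) ≤ s))

/-- The set `Tab_{D,ι}`. -/
def TabD (ι : ℕ → ℕ) (n : ℕ) : Set (ℕ → ℚ) :=
  { T | ∃ k s j, TabDcond ι n k s j ∧ T = tab (boxD ι n) s k j }

end

/-!
After the shift `t ↦ t + P(i)` of the occurrence index, the form `β` at the node `(i, t)` becomes
the mesh relation `x_{i,t} + x_{i,t+1} + ∑ a_{i,j} x_{j,t'}`, with `t'` equal to `t` or `t + 1`, and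
the boxes become the weights of the vector representation: the `i`-th arrow of its crystal
subtracts a mesh form from a box. The coefficient of a column tableau at a node counts the entries
at which arrows of that label start, minus those at which they end. So `S_k` moves one or two
entries of the column along arrows, or leaves the tableau fixed; on spin columns the label `n`
instead inserts or removes the pair `n̄`, `ovl(n-1)`. Hence `Ξ_ι ⊆ Tab_{D,ι}`.

Conversely, unless a column tableau is a coordinate form, moving one of its entries backwards along
an arrow at a node where its coefficient vanishes gives a smaller tableau, to which `S_k` applies
and recovers the original one. When no such move is available, two moves that cancel each other
leave the linear form unchanged and still decrease the column.
-/

/-! ### Occurrences of letters -/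

section Occurrences

variable {n : ℕ} {ι : ℕ → ℕ} {A : ℕ → ℕ → ℤ} {i j m k : ℕ}

lemma occPos_succ_le (h : occPos ι i m < k) (hk : ι k = i) : occPos ι i (m + 1) ≤ k :=
  Nat.sInf_le ⟨h, hk⟩

lemma occPos_one : occPos ι i 1 = firstOcc ι i := by
  simp [occPos, firstOcc, Nat.succ_le_iff]

lemma pval_le_one : pval ι i j ≤ 1 := by
  unfold pval
  split_ifs <;> decide

namespace Admissible

lemma occPos_succ_mem (h : Admissible n ι) (hi : 1 ≤ i ∧ i ≤ n) (m : ℕ) :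
    occPos ι i m < occPos ι i (m + 1) ∧ ι (occPos ι i (m + 1)) = i := by
  obtain ⟨k, hk, hki⟩ := h.2.2 i hi.1 hi.2 (occPos ι i m + 1)
  exact Nat.sInf_mem (s := {k | occPos ι i m < k ∧ ι k = i}) ⟨k, hk, hki⟩

lemma occPos_strictMono (h : Admissible n ι) (hi : 1 ≤ i ∧ i ≤ n) : StrictMono (occPos ι i) :=
  strictMono_nat_of_lt_succ fun m => (h.occPos_succ_mem hi m).1

lemma apply_occPos (h : Admissible n ι) (hi : 1 ≤ i ∧ i ≤ n) (hm : 1 ≤ m) :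
    ι (occPos ι i m) = i := by
  obtain ⟨m, rfl⟩ := Nat.exists_eq_add_of_le' hm
  exact (h.occPos_succ_mem hi m).2

lemma occPos_pos (h : Admissible n ι) (hi : 1 ≤ i ∧ i ≤ n) (hm : 1 ≤ m) : 1 ≤ occPos ι i m :=
  hm.trans (h.occPos_strictMono hi).le_apply

lemma eq_of_occPos_eq (h : Admissible n ι) (hi : 1 ≤ i ∧ i ≤ n) (hj : 1 ≤ j ∧ j ≤ n)
    (hm : 1 ≤ m) (hk : 1 ≤ k) (heq : occPos ι i m = occPos ι j k) : i = j ∧ m = k := by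
  have hij : i = j := by rw [← h.apply_occPos hi hm, heq, h.apply_occPos hj hk]
  subst hij
  exact ⟨rfl, (h.occPos_strictMono hi).injective heq⟩

lemma exists_occPos_eq (h : Admissible n ι) (hk : 1 ≤ k) : ∃ m, 1 ≤ m ∧ occPos ι (ι k) m = k := by
  have hex : ∃ m, k ≤ occPos ι (ι k) m := ⟨k, (h.occPos_strictMono (h.1 k hk)).le_apply⟩
  have hle := Nat.find_spec hex
  have hne : Nat.find hex ≠ 0 := fun h0 => by
    rw [h0, occPos] at hle
    omega
  obtain ⟨m, hm⟩ := Nat.exists_eq_succ_of_ne_zero hne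
  have hlt : occPos ι (ι k) m < k := not_le.mp (Nat.find_min hex (hm ▸ Nat.lt_succ_self m))
  exact ⟨m + 1, m.succ_pos, (occPos_succ_le hlt rfl).antisymm (by simpa only [hm] using hle)⟩

lemma kplus_occPos (h : Admissible n ι) (hi : 1 ≤ i ∧ i ≤ n) (hm : 1 ≤ m) :
    kplus ι (occPos ι i m) = occPos ι i (m + 1) := by
  rw [kplus, h.apply_occPos hi hm, occPos]

lemma kminus_occPos_succ (h : Admissible n ι) (hi : 1 ≤ i ∧ i ≤ n) (m : ℕ) :
    kminus ι (occPos ι i (m + 1)) = occPos ι i m := by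
  rw [kminus, (h.occPos_succ_mem hi m).2]
  have hub : occPos ι i m ∈ upperBounds {l | 0 < l ∧ l < occPos ι i (m + 1) ∧ ι l = i} :=
    fun l hl => not_lt.mp fun hlt => (occPos_succ_le hlt hl.2.2).not_gt hl.2.1
  rcases m.eq_zero_or_pos with rfl | hm
  · exact Nat.eq_zero_of_le_zero (csSup_le' hub)
  · exact IsGreatest.csSup_eq ⟨⟨h.occPos_pos hi hm, (h.occPos_succ_mem hi m).1,
      h.apply_occPos hi hm⟩, hub⟩

lemma firstOcc_ne (h : Admissible n ι) (hi : 1 ≤ i ∧ i ≤ n) (hj : 1 ≤ j ∧ j ≤ n)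
    (hij : i ≠ j) : firstOcc ι i ≠ firstOcc ι j := fun heq =>
  hij (h.eq_of_occPos_eq hi hj le_rfl le_rfl (by rwa [occPos_one, occPos_one])).1

lemma pval_add_pval (h : Admissible n ι) (hi : 1 ≤ i ∧ i ≤ n) (hj : 1 ≤ j ∧ j ≤ n)
    (hij : i ≠ j) : pval ι i j + pval ι j i = 1 := by
  have hne := h.firstOcc_ne hi hj hij
  unfold pval
  split_ifs <;> omega

lemma exists_mem_Ioo_occPos (h : Admissible n ι) (hA : Adapted n A ι) (hi : 1 ≤ i ∧ i ≤ n)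
    (hj : 1 ≤ j ∧ j ≤ n) (hij : i ≠ j) (haij : A i j ≠ 0) (hm : 1 ≤ m) :
    ∃ l, occPos ι i m < l ∧ l < occPos ι i (m + 1) ∧ ι l = j := by
  by_contra! hno
  have hm' := h.apply_occPos hi hm
  have hsucc := (h.occPos_succ_mem hi m).2
  refine hA i j hi.1 hi.2 hj.1 hj.2 hij haij _ _ (h.occPos_pos hi hm)
    (h.occPos_succ_mem hi m).1 (.inl hm') (.inl hsucc)
    (fun l hl hl' => ⟨fun hli => ?_, hno l hl hl'⟩) (hm'.trans hsucc.symm)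
  exact (occPos_succ_le hl hli).not_gt hl'

lemma occPos_succ_lt_occPos_succ (h : Admissible n ι) (hA : Adapted n A ι) (hi : 1 ≤ i ∧ i ≤ n)
    (hj : 1 ≤ j ∧ j ≤ n) (hij : i ≠ j) (haij : A i j ≠ 0) (hk : 1 ≤ k)
    (hlt : occPos ι j m < occPos ι i k) : occPos ι j (m + 1) < occPos ι i (k + 1) := by
  obtain ⟨l, hl, hl', hlj⟩ := h.exists_mem_Ioo_occPos hA hi hj hij haij hk
  exact (occPos_succ_le (hlt.trans hl) hlj).trans_lt hl'

lemma occPos_interleave (h : Admissible n ι) (hA : Adapted n A ι) (hi : 1 ≤ i ∧ i ≤ n)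
    (hj : 1 ≤ j ∧ j ≤ n) (hij : i ≠ j) (haij : A i j ≠ 0) (haji : A j i ≠ 0) (m : ℕ) :
    occPos ι j (m + pval ι j i) < occPos ι i (m + 1) ∧
      occPos ι i (m + 1) < occPos ι j (m + 1 + pval ι j i) := by
  induction m with
  | zero =>
    rcases (h.firstOcc_ne hi hj hij).lt_or_gt with hlt | hlt
    · rw [pval, if_neg hlt.not_gt, zero_add, add_zero, occPos_one, occPos_one]
      exact ⟨occPos_one (ι := ι) ▸ h.occPos_pos hi le_rfl, hlt⟩
    · rw [pval, if_pos hlt]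
      simp only [zero_add]
      refine ⟨by rwa [occPos_one, occPos_one], ?_⟩
      exact h.occPos_succ_lt_occPos_succ (m := 0) hA hj hi hij.symm haji le_rfl
        (h.occPos_pos hj le_rfl)
  | succ m ih =>
    refine ⟨?_, ?_⟩
    · rw [add_right_comm]
      exact h.occPos_succ_lt_occPos_succ hA hi hj hij haij m.succ_pos ih.1
    · rw [add_right_comm (m + 1)]
      exact h.occPos_succ_lt_occPos_succ hA hj hi hij.symm haji (by omega) ih.2

lemma mem_Ioo_occPos_iff (h : Admissible n ι) (hA : Adapted n A ι) (hi : 1 ≤ i ∧ i ≤ n)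
    (hj : 1 ≤ j ∧ j ≤ n) (hij : i ≠ j) (haij : A i j ≠ 0) (haji : A j i ≠ 0) (hm : 1 ≤ m) :
    (k ∈ Finset.Ioo (occPos ι i m) (occPos ι i (m + 1)) ∧ ι k = j) ↔
      k = occPos ι j (m + pval ι j i) := by
  obtain ⟨q, rfl⟩ := Nat.exists_eq_add_of_le' hm
  obtain ⟨hlo, hlo'⟩ := h.occPos_interleave hA hi hj hij haij haji q
  obtain ⟨hup, hup'⟩ := h.occPos_interleave hA hi hj hij haij haji (q + 1)
  rw [Finset.mem_Ioo]
  constructor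
  · rintro ⟨⟨hlt, hlt'⟩, rfl⟩
    obtain ⟨u, -, hu⟩ := h.exists_occPos_eq (hlt.pos)
    have hmono := h.occPos_strictMono hj
    rw [← hu] at hlt hlt'
    have h1 := hmono.lt_iff_lt.mp (hlo.trans hlt)
    have h2 := hmono.lt_iff_lt.mp (hlt'.trans hup')
    rw [show q + 1 + pval ι (ι k) i = u by omega]
    exact hu.symm
  · rintro rfl
    exact ⟨⟨hlo', hup⟩, h.apply_occPos hj (by omega)⟩

end Admissible

end Occurrences

/-! ### Nodes and their coordinates -/

/-- The coordinate form `x_{t+P(i),i}`: the shift by `P(i)` removes the functions `P` from the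
boxes and from the forms `β`. -/
noncomputable def coord (ι : ℕ → ℕ) (n i : ℕ) (t : ℤ) : ℕ → ℚ := xsj ι n (t + PD ι n i) i

/-- The position `k` with `x_k = coord ι n i t`, for a node `(i, t)`; it is `0` when
`t + P(i) = 0`. -/
noncomputable def nodePos (ι : ℕ → ℕ) (n i : ℕ) (t : ℤ) : ℕ := occPos ι i (t + PD ι n i).toNat

/-- The pairs `(i, t)` that index the positions `k ≥ 1`. -/
structure IsNode (ι : ℕ → ℕ) (n i : ℕ) (t : ℤ) : Prop where
  label : 1 ≤ i ∧ i ≤ n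
  level : 1 ≤ t + PD ι n i

/-- The form `β` at the node `(i, t)` in the shifted coordinates: the mesh relation of the
Auslander–Reiten quiver starting at `(i, t)`. -/
noncomputable def mesh (ι : ℕ → ℕ) (n i : ℕ) (t : ℤ) : ℕ → ℚ :=
  coord ι n i t + coord ι n i (t + 1) +
    ∑ j ∈ (Finset.Icc 1 n).erase i,
      (cartanD n i j : ℚ) • coord ι n j (t + if j < i then 1 else 0)

section Coordinates

variable {n : ℕ} {ι : ℕ → ℕ} {i j k : ℕ} {t u : ℤ}

lemma PD_succ (hi : 1 ≤ i) (hin : i + 2 ≤ n) : PD ι n (i + 1) = PD ι n i + pval ι (i + 1) i := by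
  rw [PD, PD, if_neg (by omega), if_pos (by omega), if_neg (by omega), if_pos (by omega),
    Finset.sum_Icc_succ_top (by omega), Nat.add_sub_cancel]

lemma PD_self (hn : 3 ≤ n) : PD ι n n = PD ι n (n - 2) + pval ι n (n - 2) := by
  rw [PD, PD, if_pos rfl, if_neg (by omega), if_pos (by omega)]

lemma PD_le_PD (hn : 3 ≤ n) (hk : 1 ≤ k ∧ k + 2 ≤ n) (hi : 1 ≤ i ∧ i ≤ n) :
    (k ≤ i → PD ι n k ≤ PD ι n i) ∧ (i ≤ k → PD ι n k + i ≤ PD ι n i + k) := by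
  have hstep : ∀ a b, 1 ≤ a → a ≤ b → b + 1 ≤ n →
      PD ι n a ≤ PD ι n b ∧ PD ι n b + a ≤ PD ι n a + b := fun a b ha hab hb => by
    induction b, hab using Nat.le_induction with
    | base => exact ⟨le_rfl, le_rfl⟩
    | succ b hab ih =>
      have := PD_succ (ι := ι) (ha.trans hab) hb
      have := pval_le_one (ι := ι) (i := b + 1) (j := b)
      have := ih (by omega)
      omega
  refine ⟨fun hki => ?_, fun hik => (hstep i k hi.1 hik (by omega)).2⟩
  rcases hi.2.eq_or_lt with rfl | hin
  · have := (hstep k (i - 2) hk.1 (by omega) (by omega)).1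
    have := PD_self (ι := ι) hn
    omega
  · exact (hstep k i hk.1 hki hin).1

lemma PD_fork_bounds (hn : 3 ≤ n) :
    (PD ι n (n - 2) ≤ PD ι n (n - 1) ∧ PD ι n (n - 1) ≤ PD ι n (n - 2) + 1) ∧
      PD ι n (n - 2) ≤ PD ι n n ∧ PD ι n n ≤ PD ι n (n - 2) + 1 := by
  have hpred := PD_succ (ι := ι) (n := n) (i := n - 2) (by omega) (by omega)
  rw [show n - 2 + 1 = n - 1 by omega] at hpred
  have hself := PD_self (ι := ι) hn
  have := pval_le_one (ι := ι) (i := n - 1) (j := n - 2)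
  have := pval_le_one (ι := ι) (i := n) (j := n - 2)
  omega

lemma cartanD_comm : cartanD n i j = cartanD n j i := by
  unfold cartanD
  split_ifs <;> first | rfl | omega

lemma PD_add_eq_of_cartanD_ne_zero (hadm : Admissible n ι) (hn : 3 ≤ n) (hi : 1 ≤ i ∧ i ≤ n)
    (hj : 1 ≤ j ∧ j ≤ n) (hij : i ≠ j) (h : cartanD n i j ≠ 0) :
    PD ι n j + (if j < i then 1 else 0) = PD ι n i + pval ι j i := by
  have hup : ∀ a b, 1 ≤ a → b ≤ n → a < b → cartanD n a b ≠ 0 →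
      PD ι n b = PD ι n a + pval ι b a := fun a b ha hb hab hne => by
    obtain ⟨rfl, hb'⟩ | ⟨rfl, rfl⟩ : (b = a + 1 ∧ a + 2 ≤ n) ∨ (a = n - 2 ∧ b = n) := by
      unfold cartanD at hne
      split_ifs at hne <;> omega
    · exact PD_succ ha hb'
    · exact PD_self hn
  have hsum := hadm.pval_add_pval hi hj hij
  split_ifs with hlt
  · have := hup j i hj.1 hi.2 hlt (cartanD_comm.trans_ne h)
    omega
  · exact hup i j hi.1 hj.2 (by omega) h

lemma coord_zero : coord ι n 0 t = 0 := if_neg (by omega)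

namespace IsNode

lemma coord_eq (h : IsNode ι n i t) : coord ι n i t = xc (nodePos ι n i t) :=
  if_pos ⟨h.level, h.label.1, h.label.2⟩

lemma one_le_toNat (h : IsNode ι n i t) : 1 ≤ (t + PD ι n i).toNat := by
  have := h.level
  omega

lemma one_le_nodePos (h : IsNode ι n i t) (hadm : Admissible n ι) : 1 ≤ nodePos ι n i t :=
  hadm.occPos_pos h.label h.one_le_toNat

lemma apply_nodePos (h : IsNode ι n i t) (hadm : Admissible n ι) : ι (nodePos ι n i t) = i :=
  hadm.apply_occPos h.label h.one_le_toNat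

lemma kplus_nodePos (h : IsNode ι n i t) (hadm : Admissible n ι) :
    kplus ι (nodePos ι n i t) = nodePos ι n i (t + 1) := by
  have := h.level
  rw [nodePos, hadm.kplus_occPos h.label h.one_le_toNat, nodePos]
  congr 1
  omega

lemma kminus_nodePos (h : IsNode ι n i t) (hadm : Admissible n ι) :
    kminus ι (nodePos ι n i t) = nodePos ι n i (t - 1) := by
  have := h.level
  rw [nodePos, nodePos, show (t + PD ι n i).toNat = (t - 1 + PD ι n i).toNat + 1 by omega,
    hadm.kminus_occPos_succ h.label]

lemma coord_apply (h : IsNode ι n i t) (hadm : Admissible n ι) (j : ℕ) (u : ℤ) :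
    coord ι n j u (nodePos ι n i t) = if j = i ∧ u = t then 1 else 0 := by
  by_cases hju : 1 ≤ u + PD ι n j ∧ 1 ≤ j ∧ j ≤ n
  · rw [coord, xsj, if_pos hju, xc]
    refine if_congr ⟨fun heq => ?_, fun ⟨hj, hu⟩ => by rw [hj, hu, nodePos]⟩ rfl rfl
    have hnode : IsNode ι n j u := ⟨hju.2, hju.1⟩
    obtain ⟨rfl, hlev⟩ := hadm.eq_of_occPos_eq h.label hju.2 h.one_le_toNat hnode.one_le_toNat heq
    have := h.level
    exact ⟨rfl, by omega⟩
  · rw [coord, xsj, if_neg hju, if_neg]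
    · rfl
    · rintro ⟨rfl, rfl⟩
      exact hju ⟨h.level, h.label⟩

lemma mesh_apply (h : IsNode ι n i t) (hadm : Admissible n ι) :
    mesh ι n i t (nodePos ι n i t) = 1 := by
  simp only [mesh, Pi.add_apply, Finset.sum_apply, Pi.smul_apply, h.coord_apply hadm]
  rw [Finset.sum_eq_zero fun j hj => by simp [(Finset.mem_erase.mp hj).1]]
  simp

lemma filter_Ioo_nodePos (h : IsNode ι n i t) (hn : 3 ≤ n) (hadm : Admissible n ι)
    (hA : Adapted n (cartanD n) ι) (hj : 1 ≤ j ∧ j ≤ n) (hij : i ≠ j) (ha : cartanD n i j ≠ 0) :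
    {q ∈ Finset.Ioo (nodePos ι n i t) (nodePos ι n i (t + 1)) | ι q = j} =
      {nodePos ι n j (t + if j < i then 1 else 0)} := by
  have hP := PD_add_eq_of_cartanD_ne_zero hadm hn h.label hj hij ha
  have := h.level
  ext q
  rw [Finset.mem_filter, Finset.mem_singleton, nodePos, nodePos, nodePos,
    show (t + 1 + (PD ι n i : ℤ)).toNat = (t + PD ι n i).toNat + 1 by omega,
    hadm.mem_Ioo_occPos_iff hA h.label hj hij ha (cartanD_comm.trans_ne ha) h.one_le_toNat]
  congr! 2
  split_ifs at hP ⊢ <;> omega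

lemma apply_mem_of_mem_Ioo (h : IsNode ι n i t) (hadm : Admissible n ι) {q : ℕ}
    (hq : q ∈ Finset.Ioo (nodePos ι n i t) (nodePos ι n i (t + 1))) :
    ι q ∈ (Finset.Icc 1 n).erase i := by
  rw [← h.kplus_nodePos hadm, Finset.mem_Ioo] at hq
  have hpos := h.one_le_nodePos hadm
  refine Finset.mem_erase.mpr ⟨fun hqi => ?_, Finset.mem_Icc.mpr (hadm.1 q (by omega))⟩
  exact Nat.notMem_of_lt_sInf hq.2 ⟨hq.1, hqi.trans (h.apply_nodePos hadm).symm⟩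

lemma beta_nodePos (h : IsNode ι n i t) (hn : 3 ≤ n) (hadm : Admissible n ι)
    (hA : Adapted n (cartanD n) ι) : beta (cartanD n) ι (nodePos ι n i t) = mesh ι n i t := by
  have hlev := h.level
  have hpos := h.one_le_nodePos hadm
  have hnext : IsNode ι n i (t + 1) := ⟨h.label, by omega⟩
  rw [beta, if_neg (by omega), h.kplus_nodePos hadm, h.apply_nodePos hadm, mesh, h.coord_eq,
    hnext.coord_eq, add_right_comm,
    ← Finset.sum_fiberwise_of_maps_to fun q hq => h.apply_mem_of_mem_Ioo hadm hq]
  congr 1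
  refine Finset.sum_congr rfl fun j hj => ?_
  obtain ⟨hji, hj⟩ := Finset.mem_erase.mp hj
  rw [Finset.mem_Icc] at hj
  by_cases ha : cartanD n i j = 0
  · rw [ha, Int.cast_zero, zero_smul]
    refine Finset.sum_eq_zero fun q hq => ?_
    rw [(Finset.mem_filter.mp hq).2, ha, Int.cast_zero, zero_smul]
  · have hP := PD_add_eq_of_cartanD_ne_zero hadm hn h.label hj hji.symm ha
    have hnode : IsNode ι n j (t + if j < i then 1 else 0) :=
      ⟨hj, by split_ifs at hP ⊢ <;> omega⟩
    rw [h.filter_Ioo_nodePos hn hadm hA hj hji.symm ha, Finset.sum_singleton,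
      hnode.apply_nodePos hadm, hnode.coord_eq]

end IsNode

lemma Admissible.exists_isNode (hadm : Admissible n ι) (hk : 1 ≤ k) :
    ∃ i t, IsNode ι n i t ∧ nodePos ι n i t = k := by
  obtain ⟨m, hm, hmk⟩ := hadm.exists_occPos_eq hk
  refine ⟨ι k, m - PD ι n (ι k), ⟨hadm.1 k hk, by omega⟩, ?_⟩
  rwa [nodePos, sub_add_cancel, Int.toNat_natCast]

end Coordinates

/-! ### Boxes -/

/-- In the crystal of the vector representation the label `i` has the arrows `m → i + 1` and
`2 n - i → 2 n + 1 - m`, where `m = min i (n - 1)`. The node `(i, t)` acts on the entry at level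
`t` of a column by the first arrow, and on the entry at level `v` by the second one. -/
structure VectorArrows (n i m : ℕ) (t v : ℤ) : Prop where
  source_eq : m = min i (n - 1)
  level_eq : v = t + m + 1 - n

section Boxes

variable {n : ℕ} {ι : ℕ → ℕ} {i m e : ℕ} {t v L : ℤ}

lemma mesh_eq_sub_sum (S : Finset ℕ) (hS : ∀ j ∈ S, j ≤ n ∧ j ≠ i)
    (ha : ∀ j, 1 ≤ j → j ≤ n → j ≠ i → cartanD n i j = if j ∈ S then -1 else 0) :
    mesh ι n i t = coord ι n i t + coord ι n i (t + 1) -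
      ∑ j ∈ S, coord ι n j (t + if j < i then 1 else 0) := by
  have hfilter : {j ∈ (Finset.Icc 1 n).erase i | j ∈ S} ⊆ S := fun j hj =>
    (Finset.mem_filter.mp hj).2
  rw [mesh, sub_eq_add_neg, ← Finset.sum_neg_distrib, ← Finset.sum_subset hfilter,
    Finset.sum_filter]
  · congr 1
    refine Finset.sum_congr rfl fun j hj => ?_
    rw [Finset.mem_erase, Finset.mem_Icc] at hj
    rw [ha j hj.2.1 hj.2.2 hj.1]
    split_ifs <;> simp
  · intro j hj hj'
    obtain rfl : j = 0 := by
      by_contra h0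
      have := hS j hj
      exact hj' (Finset.mem_filter.mpr
        ⟨Finset.mem_erase.mpr ⟨this.2, Finset.mem_Icc.mpr (by omega)⟩, hj⟩)
    rw [coord_zero, neg_zero]

lemma mesh_of_add_three_le (hi : 1 ≤ i) (hin : i + 3 ≤ n) :
    mesh ι n i t = coord ι n i t + coord ι n i (t + 1) - coord ι n (i - 1) (t + 1) -
      coord ι n (i + 1) t := by
  rw [mesh_eq_sub_sum {i - 1, i + 1}, Finset.sum_pair (by omega), if_pos (by omega),
    if_neg (by omega), add_zero, sub_sub]
  · simp only [Finset.mem_insert, Finset.mem_singleton]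
    omega
  · intro j hj _ hji
    simp only [cartanD, Finset.mem_insert, Finset.mem_singleton]
    split_ifs <;> omega

lemma mesh_of_add_two_eq (hi : 1 ≤ i) (hin : i + 2 = n) :
    mesh ι n i t = coord ι n i t + coord ι n i (t + 1) - coord ι n (i - 1) (t + 1) -
      coord ι n (n - 1) t - coord ι n n t := by
  have hnot : i - 1 ∉ ({n - 1, n} : Finset ℕ) := by
    simp only [Finset.mem_insert, Finset.mem_singleton]
    omega
  rw [mesh_eq_sub_sum {i - 1, n - 1, n}, Finset.sum_insert hnot,
    Finset.sum_pair (by omega), if_pos (by omega), if_neg (by omega), if_neg (by omega), add_zero,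
    sub_sub, sub_sub]
  · simp only [Finset.mem_insert, Finset.mem_singleton]
    omega
  · intro j hj hjn hji
    simp only [cartanD, Finset.mem_insert, Finset.mem_singleton]
    split_ifs <;> omega

lemma mesh_of_le_add_one (hn : 3 ≤ n) (hi : n ≤ i + 1 ∧ i ≤ n) :
    mesh ι n i t = coord ι n i t + coord ι n i (t + 1) - coord ι n (n - 2) (t + 1) := by
  rw [mesh_eq_sub_sum {n - 2}, Finset.sum_singleton, if_pos (by omega)]
  · simp only [Finset.mem_singleton]
    omega
  · intro j _ hjn hji
    simp only [cartanD, Finset.mem_singleton]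
    split_ifs <;> omega

lemma boxD_zero : boxD ι n L 0 = coord ι n n L := rfl

lemma boxD_of_add_two_le (he : 1 ≤ e) (hen : e + 2 ≤ n) :
    boxD ι n L e = coord ι n e L - coord ι n (e - 1) (L + 1) := by
  rw [boxD, if_neg (by omega), if_pos (by omega), coord, coord, add_right_comm]

lemma boxD_of_add_one_eq (he : 1 ≤ e) (hen : e + 1 = n) :
    boxD ι n L e = coord ι n (n - 1) L + coord ι n n L - coord ι n (n - 2) (L + 1) := by
  rw [boxD, if_neg (by omega), if_neg (by omega), if_pos (by omega), coord, coord, coord,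
    add_right_comm]

lemma boxD_self (hn : 3 ≤ n) :
    boxD ι n L n = coord ι n n L - coord ι n (n - 1) (L + 1) := by
  rw [boxD, if_neg (by omega), if_neg (by omega), if_neg (by omega), if_pos rfl, coord, coord,
    add_right_comm]

lemma boxD_add_one (hn : 3 ≤ n) :
    boxD ι n L (n + 1) = coord ι n (n - 1) L - coord ι n n (L + 1) := by
  rw [boxD, if_neg (by omega), if_neg (by omega), if_neg (by omega), if_neg (by omega),
    if_pos rfl, coord, coord, add_right_comm]

lemma boxD_add_two (hn : 3 ≤ n) :
    boxD ι n L (n + 2) =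
      coord ι n (n - 2) (L + 1) - coord ι n (n - 1) (L + 1) - coord ι n n (L + 1) := by
  rw [boxD, if_neg (by omega), if_neg (by omega), if_neg (by omega), if_neg (by omega),
    if_neg (by omega), if_pos rfl]
  simp only [coord, add_right_comm L 1]

lemma boxD_of_add_eq (hi : 1 ≤ i) (hin : i + 2 ≤ n) (he : e + i = 2 * n + 1) :
    boxD ι n L e = coord ι n (i - 1) (L + n - i) - coord ι n i (L + n - i) := by
  rw [boxD, if_neg (by omega), if_neg (by omega), if_neg (by omega), if_neg (by omega),
    if_neg (by omega), if_neg (by omega), show 2 * n - e = i - 1 by omega,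
    show 2 * n + 1 - e = i by omega, coord, coord]
  congr 2 <;> ring

lemma VectorArrows.boxD_fst (h : VectorArrows n i m t v) (hn : 3 ≤ n) (hi : 1 ≤ i ∧ i ≤ n) :
    boxD ι n t (i + 1) = boxD ι n t m - mesh ι n i t := by
  have hm := h.source_eq
  obtain hlt | heq | heq | rfl : i + 3 ≤ n ∨ i + 2 = n ∨ i + 1 = n ∨ n = i := by omega
  · rw [show m = i by omega, boxD_of_add_two_le (by omega) (by omega),
      boxD_of_add_two_le hi.1 (by omega), mesh_of_add_three_le hi.1 hlt, Nat.add_sub_cancel]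
    abel
  · rw [show m = i by omega, boxD_of_add_one_eq (by omega) (by omega),
      boxD_of_add_two_le hi.1 (by omega), mesh_of_add_two_eq hi.1 heq, show n - 2 = i by omega]
    abel
  · rw [show m = i by omega, heq, boxD_self hn, boxD_of_add_one_eq hi.1 heq,
      mesh_of_le_add_one hn (by omega), show n - 1 = i by omega]
    abel
  · rw [boxD_add_one hn, boxD_of_add_one_eq (by omega) (by omega),
      mesh_of_le_add_one hn (by omega)]
    abel

lemma VectorArrows.boxD_snd (h : VectorArrows n i m t v) (hn : 3 ≤ n) (hi : 1 ≤ i ∧ i ≤ n) :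
    boxD ι n v (2 * n + 1 - m) = boxD ι n v (2 * n - i) - mesh ι n i t := by
  have hm := h.source_eq
  have hv := h.level_eq
  obtain hlt | heq | heq | rfl : i + 3 ≤ n ∨ i + 2 = n ∨ i + 1 = n ∨ n = i := by omega
  · rw [boxD_of_add_eq (i := i) hi.1 (by omega) (by omega),
      boxD_of_add_eq (i := i + 1) (by omega) (by omega) (by omega),
      mesh_of_add_three_le hi.1 hlt, Nat.add_sub_cancel, show v + n - i = t + 1 by omega,
      show v + n - (i + 1 : ℕ) = t by omega]
    abel
  · rw [boxD_of_add_eq (i := i) hi.1 (by omega) (by omega), show 2 * n - i = n + 2 by omega,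
      boxD_add_two hn, mesh_of_add_two_eq hi.1 heq, show v + n - i = t + 1 by omega,
      show v + 1 = t by omega, show n - 2 = i by omega]
    abel
  · rw [show 2 * n + 1 - m = n + 2 by omega, show 2 * n - i = n + 1 by omega, boxD_add_two hn,
      boxD_add_one hn, mesh_of_le_add_one hn (by omega), show v = t by omega,
      show n - 1 = i by omega]
    abel
  · rw [show 2 * n + 1 - m = n + 2 by omega, show 2 * n - n = n by omega, boxD_add_two hn,
      boxD_self hn, mesh_of_le_add_one hn (by omega), show v = t by omega]
    abel

lemma boxD_spin (hn : 3 ≤ n) :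
    boxD ι n L (n + 2) + boxD ι n (L + 1) (n + 1) + boxD ι n (L + 2) 0 =
      boxD ι n L 0 - mesh ι n n L := by
  rw [boxD_add_two hn, boxD_add_one hn, boxD_zero, boxD_zero, mesh_of_le_add_one hn (by omega),
    add_assoc L 1 1, one_add_one_eq_two]
  abel

namespace IsNode

lemma boxD_apply_of_lt (h : IsNode ι n i t) (ha : VectorArrows n i m t v)
    (hadm : Admissible n ι) (he : 1 ≤ e ∧ e < n) :
    boxD ι n L e (nodePos ι n i t) =
      (if L = t ∧ e = m then 1 else 0) - (if L = t - 1 ∧ e = i + 1 then 1 else 0) := by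
  have hm := ha.source_eq
  have hi := h.label
  by_cases hen : e + 2 ≤ n
  · rw [boxD_of_add_two_le he.1 hen, Pi.sub_apply, h.coord_apply hadm, h.coord_apply hadm]
    congr 1 <;> exact if_congr (by omega) rfl rfl
  · rw [boxD_of_add_one_eq he.1 (by omega), Pi.sub_apply, Pi.add_apply, h.coord_apply hadm,
      h.coord_apply hadm, h.coord_apply hadm]
    split_ifs <;> first | omega | norm_num

lemma boxD_apply_of_mid (h : IsNode ι n i t) (ha : VectorArrows n i m t v) (hn : 3 ≤ n)
    (hadm : Admissible n ι) (he : e = n ∨ e = n + 1) :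
    boxD ι n L e (nodePos ι n i t) =
      (if L = v ∧ e = 2 * n - i then 1 else 0) - (if L = t - 1 ∧ e = i + 1 then 1 else 0) := by
  have hm := ha.source_eq
  have hv := ha.level_eq
  have hi := h.label
  rcases he with rfl | rfl
  · rw [boxD_self hn, Pi.sub_apply, h.coord_apply hadm, h.coord_apply hadm]
    congr 1 <;> exact if_congr (by omega) rfl rfl
  · rw [boxD_add_one hn, Pi.sub_apply, h.coord_apply hadm, h.coord_apply hadm]
    congr 1 <;> exact if_congr (by omega) rfl rfl

lemma boxD_apply_of_gt (h : IsNode ι n i t) (ha : VectorArrows n i m t v) (hn : 3 ≤ n)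
    (hadm : Admissible n ι) (he : n + 2 ≤ e ∧ e ≤ 2 * n) :
    boxD ι n L e (nodePos ι n i t) =
      (if L = v ∧ e = 2 * n - i then 1 else 0) -
        (if L = v - 1 ∧ e = 2 * n + 1 - m then 1 else 0) := by
  have hm := ha.source_eq
  have hv := ha.level_eq
  have hi := h.label
  obtain rfl | hen : e = n + 2 ∨ n + 3 ≤ e := by omega
  · rw [boxD_add_two hn, Pi.sub_apply, Pi.sub_apply, h.coord_apply hadm, h.coord_apply hadm,
      h.coord_apply hadm]
    split_ifs <;> first | omega | norm_num
  · rw [boxD_of_add_eq (i := 2 * n + 1 - e) (by omega) (by omega) (by omega), Pi.sub_apply,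
      h.coord_apply hadm, h.coord_apply hadm]
    congr 1 <;> exact if_congr (by omega) rfl rfl

lemma boxD_apply (h : IsNode ι n i t) (ha : VectorArrows n i m t v) (hn : 3 ≤ n)
    (hadm : Admissible n ι) (he : e ≤ 2 * n) :
    boxD ι n L e (nodePos ι n i t) =
      ((if L = t ∧ e = m then 1 else 0) - (if L = t - 1 ∧ e = i + 1 then 1 else 0)) +
      ((if L = v ∧ e = 2 * n - i then 1 else 0) -
        (if L = v - 1 ∧ e = 2 * n + 1 - m then 1 else 0)) +
      (if i = n ∧ L = t ∧ e = 0 then 1 else 0) := by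
  have hm := ha.source_eq
  have hi := h.label
  obtain rfl | he' | he' | he' : e = 0 ∨ (1 ≤ e ∧ e < n) ∨ (e = n ∨ e = n + 1) ∨ n + 2 ≤ e := by
    omega
  · have hfst : ¬(L = t ∧ 0 = m) := by omega
    have hsnd : ¬(L = v ∧ 0 = 2 * n - i) := by omega
    have hsnd' : ¬(L = v - 1 ∧ 0 = 2 * n + 1 - m) := by omega
    rw [if_neg hfst, if_neg (by omega), if_neg hsnd, if_neg hsnd', boxD_zero,
      h.coord_apply hadm, sub_self, add_zero, zero_add]
    exact if_congr (by tauto) rfl rfl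
  · have hsnd : ¬(L = v ∧ e = 2 * n - i) := by omega
    have hsnd' : ¬(L = v - 1 ∧ e = 2 * n + 1 - m) := by omega
    have hspin : ¬(i = n ∧ L = t ∧ e = 0) := by omega
    rw [h.boxD_apply_of_lt ha hadm he', if_neg hsnd, if_neg hsnd', if_neg hspin, sub_self,
      add_zero, add_zero]
  · have hfst : ¬(L = t ∧ e = m) := by omega
    have hsnd' : ¬(L = v - 1 ∧ e = 2 * n + 1 - m) := by omega
    have hspin : ¬(i = n ∧ L = t ∧ e = 0) := by omega
    rw [h.boxD_apply_of_mid ha hn hadm he', if_neg hfst, if_neg hsnd', if_neg hspin]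
    ring
  · have hfst : ¬(L = t ∧ e = m) := by omega
    have hfst' : ¬(L = t - 1 ∧ e = i + 1) := by omega
    have hspin : ¬(i = n ∧ L = t ∧ e = 0) := by omega
    rw [h.boxD_apply_of_gt ha hn hadm ⟨he', he⟩, if_neg hfst, if_neg hfst', if_neg hspin,
      sub_self, zero_add, add_zero]

end IsNode

end Boxes

/-! ### The operators `S_k` -/

section Operators

variable {n : ℕ} {ι : ℕ → ℕ} {A : ℕ → ℕ → ℤ} {i k : ℕ} {t : ℤ} {φ : ℕ → ℚ}

lemma Sop_of_apply_eq_zero (h : φ k = 0) : Sop A ι k φ = φ := by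
  rw [Sop, if_neg h.not_gt, h, zero_smul, sub_zero]

lemma IsNode.Sop_of_pos (h : IsNode ι n i t) (hn : 3 ≤ n) (hadm : Admissible n ι)
    (hA : Adapted n (cartanD n) ι) (hφ : 0 < φ (nodePos ι n i t)) :
    Sop (cartanD n) ι (nodePos ι n i t) φ = φ - φ (nodePos ι n i t) • mesh ι n i t := by
  rw [Sop, if_pos hφ, h.beta_nodePos hn hadm hA]

lemma IsNode.Sop_of_neg (h : IsNode ι n i t) (hn : 3 ≤ n) (hadm : Admissible n ι)
    (hA : Adapted n (cartanD n) ι) (hφ : φ (nodePos ι n i t) < 0) :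
    Sop (cartanD n) ι (nodePos ι n i t) φ = φ ∨
      Sop (cartanD n) ι (nodePos ι n i t) φ =
        φ - φ (nodePos ι n i t) • mesh ι n i (t - 1) := by
  rw [Sop, if_neg hφ.not_gt, h.kminus_nodePos hadm]
  by_cases hlev : 1 ≤ t - 1 + PD ι n i
  · exact .inr (by rw [IsNode.beta_nodePos ⟨h.label, hlev⟩ hn hadm hA])
  · have hfirst : nodePos ι n i (t - 1) = 0 := by
      rw [nodePos, Int.toNat_eq_zero.mpr (by omega), occPos]
    exact .inl (by rw [hfirst, beta, if_pos rfl, smul_zero, sub_zero])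

lemma Sop_mem {T : Set (ℕ → ℚ)} (hn : 3 ≤ n) (hadm : Admissible n ι)
    (hA : Adapted n (cartanD n) ι) (hφ : φ ∈ T)
    (hpos : ∀ i t, IsNode ι n i t → 0 < φ (nodePos ι n i t) →
      φ - φ (nodePos ι n i t) • mesh ι n i t ∈ T)
    (hneg : ∀ i t, IsNode ι n i t → φ (nodePos ι n i t) < 0 →
      φ - φ (nodePos ι n i t) • mesh ι n i (t - 1) ∈ T)
    (hk : 1 ≤ k) : Sop (cartanD n) ι k φ ∈ T := by
  obtain ⟨i, t, h, rfl⟩ := hadm.exists_isNode hk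
  obtain hc | hc | hc := lt_trichotomy (φ (nodePos ι n i t)) 0
  · rcases h.Sop_of_neg hn hadm hA hc with hS | hS <;> rw [hS]
    exacts [hφ, hneg i t h hc]
  · rwa [Sop_of_apply_eq_zero hc]
  · rw [h.Sop_of_pos hn hadm hA hc]
    exact hpos i t h hc

lemma IsNode.coord_mem_Xi (h : IsNode ι n i t) (hadm : Admissible n ι) :
    coord ι n i t ∈ Xi A ι := by
  rw [h.coord_eq]
  exact .base _ (h.one_le_nodePos hadm)

/-- The mechanism of the reachability proof: an element of `Ξ_ι` is recovered from its translate
by a mesh form, which `S_k` brings back. -/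
lemma IsNode.mem_Xi_of_add_mesh_mem (h : IsNode ι n i t) (hn : 3 ≤ n) (hadm : Admissible n ι)
    (hA : Adapted n (cartanD n) ι) (hφ : φ (nodePos ι n i t) = 0)
    (hmem : φ + mesh ι n i t ∈ Xi (cartanD n) ι) : φ ∈ Xi (cartanD n) ι := by
  have hc : (φ + mesh ι n i t) (nodePos ι n i t) = 1 := by
    rw [Pi.add_apply, hφ, h.mesh_apply hadm, zero_add]
  have hS := XiMem.step _ (h.one_le_nodePos hadm) _ hmem
  rwa [h.Sop_of_pos hn hadm hA (hc ▸ one_pos), hc, one_smul, add_sub_cancel_right] at hS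

end Operators

/-! ### Columns indexed by levels -/

section Forms

variable {n : ℕ} {ι : ℕ → ℕ} {i m k e : ℕ} {s t u v : ℤ} {g g' : ℤ → ℕ}

/-- The column tableau `[j_1,…,j_k]_s` with the entry `j_i` recorded as `g (s + k - i)`: the
argument of `g` is the level of a box, and the entries are read from top to bottom as the level
decreases from `s + k - 1` to `s`. -/
noncomputable def colForm (ι : ℕ → ℕ) (n : ℕ) (s : ℤ) (k : ℕ) (g : ℤ → ℕ) : ℕ → ℚ :=
  ∑ L ∈ Finset.Ico s (s + k), boxD ι n L (g L)

/-- The column `g` of levels `s, …, s + k - 1` has the entry `e` at level `u`. -/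
def HasEntry (s : ℤ) (k : ℕ) (g : ℤ → ℕ) (u : ℤ) (e : ℕ) : Prop := s ≤ u ∧ u < s + k ∧ g u = e

instance : Decidable (HasEntry s k g u e) := inferInstanceAs (Decidable (_ ∧ _ ∧ _))

lemma tab_eq_colForm (g : ℤ → ℕ) :
    tab (boxD ι n) s k (fun i => g (s + k - i)) = colForm ι n s k g := by
  refine Finset.sum_bij' (fun i _ => s + k - i) (fun L _ => (s + k - L).toNat) ?_ ?_ ?_ ?_
    fun _ _ => rfl <;>
  simp only [Finset.mem_Icc, Finset.mem_Ico] <;> omega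

lemma colForm_congr (h : ∀ L, s ≤ L → L < s + k → g L = g' L) :
    colForm ι n s k g = colForm ι n s k g' :=
  Finset.sum_congr rfl fun L hL => by
    rw [Finset.mem_Ico] at hL
    rw [h L hL.1 hL.2]

lemma colForm_zero : colForm ι n s 0 g = 0 := by
  rw [colForm, Nat.cast_zero, add_zero, Finset.Ico_self, Finset.sum_empty]

lemma sum_Ico_add_cast_add_one {M : Type*} [AddCommMonoid M] (f : ℤ → M) :
    ∑ L ∈ Finset.Ico s (s + (k + 1 : ℕ)), f L = ∑ L ∈ Finset.Ico s (s + k), f L + f (s + k) := by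
  rw [Nat.cast_add_one, ← add_assoc, Finset.sum_Ico_add_eq_sum_Ico_add_one (by omega)]

lemma colForm_add_one :
    colForm ι n s (k + 1) g = colForm ι n s k g + boxD ι n (s + k) (g (s + k)) :=
  sum_Ico_add_cast_add_one _

namespace HasEntry

lemma sum_update {M : Type*} [AddCommMonoid M] (h : HasEntry s k g u e) (f : ℤ → ℕ → M)
    (e' : ℕ) :
    ∑ L ∈ Finset.Ico s (s + k), f L (Function.update g u e' L) + f u e =
      ∑ L ∈ Finset.Ico s (s + k), f L (g L) + f u e' := by
  obtain ⟨hsu, hus, rfl⟩ := h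
  have hu : u ∈ Finset.Ico s (s + k) := Finset.mem_Ico.mpr ⟨hsu, hus⟩
  have hne : ∑ L ∈ (Finset.Ico s (s + k)).erase u, f L (Function.update g u e' L) =
      ∑ L ∈ (Finset.Ico s (s + k)).erase u, f L (g L) :=
    Finset.sum_congr rfl fun L hL => by rw [Function.update_of_ne (Finset.ne_of_mem_erase hL)]
  rw [← Finset.add_sum_erase _ _ hu, ← Finset.add_sum_erase _ (fun L => f L (g L)) hu, hne,
    Function.update_self]
  abel

lemma colForm_update (h : HasEntry s k g u e) {e' : ℕ} {φ : ℕ → ℚ}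
    (hbox : boxD ι n u e' = boxD ι n u e - φ) :
    colForm ι n s k (Function.update g u e') = colForm ι n s k g - φ := by
  have hsum := h.sum_update (boxD ι n) e'
  rw [colForm, colForm]
  linear_combination hsum + hbox

end HasEntry

lemma sum_ite_eq_ite_hasEntry :
    ∑ L ∈ Finset.Ico s (s + k), (if L = u ∧ g L = e then (1 : ℚ) else 0) =
      if HasEntry s k g u e then 1 else 0 := by
  have hpt (L : ℤ) : (if L = u ∧ g L = e then (1 : ℚ) else 0) =
      if L = u then if g u = e then 1 else 0 else 0 := by
    rw [ite_and]
    split_ifs with hL <;> simp_all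
  simp only [hpt]
  rw [Finset.sum_ite_eq', ← ite_and]
  exact if_congr (by rw [Finset.mem_Ico, and_assoc, HasEntry]) rfl rfl

lemma IsNode.colForm_apply (h : IsNode ι n i t) (ha : VectorArrows n i m t v) (hn : 3 ≤ n)
    (hadm : Admissible n ι) (hg : ∀ L, s ≤ L → L < s + k → g L ≤ 2 * n) :
    colForm ι n s k g (nodePos ι n i t) =
      ((if HasEntry s k g t m then 1 else 0) - (if HasEntry s k g (t - 1) (i + 1) then 1 else 0)) +
      ((if HasEntry s k g v (2 * n - i) then 1 else 0) -
        (if HasEntry s k g (v - 1) (2 * n + 1 - m) then 1 else 0)) +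
      (if i = n ∧ HasEntry s k g t 0 then 1 else 0) := by
  have hbox : ∀ L ∈ Finset.Ico s (s + k), boxD ι n L (g L) (nodePos ι n i t) = _ := fun L hL =>
    have hL' := Finset.mem_Ico.mp hL
    h.boxD_apply ha hn hadm (hg L hL'.1 hL'.2)
  rw [colForm, Finset.sum_apply, Finset.sum_congr rfl hbox]
  by_cases hin : i = n <;>
    simp only [hin, true_and, false_and, if_false, Finset.sum_add_distrib,
      Finset.sum_sub_distrib, Finset.sum_const_zero, sum_ite_eq_ite_hasEntry]

end Forms

/-! ### Ordinary and spin columns -/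

/-- The columns of part (a) of the definition of `Tab_{D,ι}`, indexed by levels. -/
structure IsColumn (ι : ℕ → ℕ) (n : ℕ) (s : ℤ) (k : ℕ) (g : ℤ → ℕ) : Prop where
  height : 1 ≤ k ∧ k + 2 ≤ n
  level : 1 ≤ s + PD ι n k
  entry_mem : ∀ L, s ≤ L → L < s + k → 1 ≤ g L ∧ g L ≤ 2 * n
  entry_step : ∀ L, s ≤ L → L + 1 < s + k → g (L + 1) < g L ∨ (g L = n ∧ g (L + 1) = n + 1)

/-- The columns of part (b) of the definition of `Tab_{D,ι}`, indexed by levels. They are headed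
by `ovl(n+1)`, which is encoded as `0`. -/
structure IsSpinColumn (ι : ℕ → ℕ) (n : ℕ) (s : ℤ) (k : ℕ) (g : ℤ → ℕ) : Prop where
  height : 1 ≤ k ∧ k ≤ n + 1
  level_even : k % 2 = 0 → 1 ≤ s + PD ι n (n - 1)
  level_odd : k % 2 = 1 → 1 ≤ s + PD ι n n
  top : g (s + k - 1) = 0
  entry_mem : ∀ L, s ≤ L → L + 1 < s + k → n + 1 ≤ g L ∧ g L ≤ 2 * n
  entry_step : ∀ L, s ≤ L → L + 1 < s + k → g (L + 1) < g L

section Columns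

variable {n : ℕ} {ι : ℕ → ℕ} {k : ℕ} {s : ℤ} {g : ℤ → ℕ} {φ : ℕ → ℚ}

lemma not_leD_iff {a b : ℕ} : ¬leD n a b ↔ b < a ∨ (a = n ∧ b = n + 1) := by
  rw [leD]
  omega

lemma forall_entry_iff (Q : ℕ → Prop) (a : ℕ) : (∀ i : ℕ, a ≤ i → i ≤ k → Q (g (s + k - i))) ↔
    ∀ L, s ≤ L → L + a ≤ s + k → Q (g L) := by
  refine ⟨fun h L hL hL' => ?_, fun h i hi hik => h _ (by omega) (by omega)⟩
  have := h (s + k - L).toNat (by omega) (by omega)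
  rwa [show s + k - ((s + k - L).toNat : ℤ) = L by omega] at this

lemma forall_step_iff (Q : ℕ → ℕ → Prop) (a : ℕ) :
    (∀ i : ℕ, a ≤ i → i < k → Q (g (s + k - i)) (g (s + k - (i + 1 : ℕ)))) ↔
      ∀ L, s ≤ L → L + a < s + k → Q (g (L + 1)) (g L) := by
  refine ⟨fun h L hL hL' => ?_, fun h i hi hik => ?_⟩
  · have := h (s + k - L - 1).toNat (by omega) (by omega)
    rwa [show s + k - ((s + k - L - 1).toNat : ℤ) = L + 1 by omega,
      show s + k - ((s + k - L - 1).toNat + 1 : ℕ) = L by omega] at this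
  · have := h (s + k - (i + 1 : ℕ)) (by omega) (by omega)
    rwa [show s + k - (i + 1 : ℕ) + 1 = s + k - i by omega] at this

lemma tabDcond_iff :
    TabDcond ι n k s (fun i => g (s + k - i)) ↔ IsColumn ι n s k g ∨ IsSpinColumn ι n s k g := by
  have hentry := forall_entry_iff (k := k) (s := s) (g := g) (fun e => 1 ≤ e ∧ e ≤ 2 * n) 1
  have hstep := forall_step_iff (k := k) (s := s) (g := g)
    (fun a b => a < b ∨ (b = n ∧ a = n + 1)) 1
  have hentry' := forall_entry_iff (k := k) (s := s) (g := g) (fun e => n + 1 ≤ e ∧ e ≤ 2 * n) 2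
  have hstep' := forall_step_iff (k := k) (s := s) (g := g) (fun a b => a < b) 2
  simp only [TabDcond, not_leD_iff]
  rw [hentry, hstep, hentry', hstep']
  refine or_congr ⟨?_, fun hg => ?_⟩ ⟨?_, fun hg => ?_⟩
  · rintro ⟨hk, hk', hent, hstep, hs⟩
    exact ⟨⟨hk, by omega⟩, by omega, hent, hstep⟩
  · have hk := hg.height
    have hs := hg.level
    exact ⟨hk.1, by omega, hg.entry_mem, hg.entry_step, by omega⟩
  · rintro ⟨htop, hk, hk', hent, hstep, heven, hodd⟩
    rw [Nat.cast_one] at htop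
    refine ⟨⟨hk, hk'⟩, by omega, by omega, htop, fun L hL hL' => hent L hL (by omega),
      fun L hL hL' => ?_⟩
    obtain hlt | heq : L + 2 < s + k ∨ L + 1 = s + k - 1 := by omega
    · exact hstep L hL hlt
    · have := hent L hL (by omega)
      rw [heq, htop]
      omega
  · have heven := hg.level_even
    have hodd := hg.level_odd
    exact ⟨hg.top, hg.height.1, hg.height.2, fun L hL hL' => hg.entry_mem L hL (by omega),
      fun L hL hL' => hg.entry_step L hL (by omega), by omega, by omega⟩

lemma mem_TabD_iff : φ ∈ TabD ι n ↔
    ∃ s k g, (IsColumn ι n s k g ∨ IsSpinColumn ι n s k g) ∧ φ = colForm ι n s k g := by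
  constructor
  · rintro ⟨k, s, j, hj, rfl⟩
    obtain ⟨g, rfl⟩ : ∃ g : ℤ → ℕ, j = fun i : ℕ => g (s + k - i) :=
      ⟨fun L => j (s + k - L).toNat, funext fun i => by simp⟩
    exact ⟨s, k, g, tabDcond_iff.mp hj, tab_eq_colForm g⟩
  · rintro ⟨s, k, g, hg, rfl⟩
    exact ⟨k, s, _, tabDcond_iff.mpr hg, (tab_eq_colForm g).symm⟩

end Columns

/-! ### Ordinary columns are closed under the operators -/

section Closure

variable {n : ℕ} {ι : ℕ → ℕ} {i m k e : ℕ} {s t u v : ℤ} {g : ℤ → ℕ}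

lemma ite_sub_ite_cases (P Q : Prop) [Decidable P] [Decidable Q] :
    ((if P then (1 : ℚ) else 0) - (if Q then 1 else 0) = 1 ∧ P ∧ ¬Q) ∨
    ((if P then (1 : ℚ) else 0) - (if Q then 1 else 0) = -1 ∧ ¬P ∧ Q) ∨
    ((if P then (1 : ℚ) else 0) - (if Q then 1 else 0) = 0 ∧ (P ↔ Q)) := by
  by_cases hP : P <;> by_cases hQ : Q <;> simp [hP, hQ]

lemma hasEntry_update_of_ne {u' : ℤ} {e' : ℕ} (h : u ≠ u') :
    HasEntry s k (Function.update g u' e') u e ↔ HasEntry s k g u e := by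
  rw [HasEntry, HasEntry, Function.update_of_ne h]

lemma VectorArrows.boxD_fst_symm (h : VectorArrows n i m t v) (hn : 3 ≤ n) (hi : 1 ≤ i ∧ i ≤ n) :
    boxD ι n t m = boxD ι n t (i + 1) - -mesh ι n i t := by
  rw [h.boxD_fst hn hi]
  abel

lemma VectorArrows.boxD_snd_symm (h : VectorArrows n i m t v) (hn : 3 ≤ n) (hi : 1 ≤ i ∧ i ≤ n) :
    boxD ι n v (2 * n - i) = boxD ι n v (2 * n + 1 - m) - -mesh ι n i t := by
  rw [h.boxD_snd hn hi]
  abel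

namespace IsColumn

lemma colForm_apply (hg : IsColumn ι n s k g) (h : IsNode ι n i t) (ha : VectorArrows n i m t v)
    (hn : 3 ≤ n) (hadm : Admissible n ι) :
    colForm ι n s k g (nodePos ι n i t) =
      ((if HasEntry s k g t m then 1 else 0) - (if HasEntry s k g (t - 1) (i + 1) then 1 else 0)) +
      ((if HasEntry s k g v (2 * n - i) then 1 else 0) -
        (if HasEntry s k g (v - 1) (2 * n + 1 - m) then 1 else 0)) := by
  have hspin : ¬(i = n ∧ HasEntry s k g t 0) := by
    rintro ⟨-, hs, hk, h0⟩
    have := hg.entry_mem t hs hk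
    omega
  rw [h.colForm_apply ha hn hadm fun L hL hL' => (hg.entry_mem L hL hL').2, if_neg hspin, add_zero]

lemma update (hg : IsColumn ι n s k g) (he : 1 ≤ e ∧ e ≤ 2 * n)
    (hbelow : s ≤ u - 1 → e < g (u - 1) ∨ (g (u - 1) = n ∧ e = n + 1))
    (habove : u + 1 < s + k → g (u + 1) < e ∨ (e = n ∧ g (u + 1) = n + 1)) :
    IsColumn ι n s k (Function.update g u e) where
  height := hg.height
  level := hg.level
  entry_mem L hL hL' := by
    obtain rfl | hu := eq_or_ne L u
    · rwa [Function.update_self]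
    · rw [Function.update_of_ne hu]
      exact hg.entry_mem L hL hL'
  entry_step L hL hL' := by
    obtain rfl | hu := eq_or_ne L u
    · rw [Function.update_self, Function.update_of_ne (by omega)]
      exact habove hL'
    obtain rfl | hu' := eq_or_ne u (L + 1)
    · rw [Function.update_self, Function.update_of_ne hu]
      simpa using hbelow (by omega)
    · rw [Function.update_of_ne hu, Function.update_of_ne hu'.symm]
      exact hg.entry_step L hL hL'

lemma raise_fst (hg : IsColumn ι n s k g) (ha : VectorArrows n i m t v) (hi : 1 ≤ i ∧ i ≤ n)
    (hm : HasEntry s k g t m) (hi' : ¬HasEntry s k g (t - 1) (i + 1)) :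
    IsColumn ι n s k (Function.update g t (i + 1)) := by
  obtain ⟨hst, htk, hgt⟩ := hm
  have hheight := hg.height
  have hsource := ha.source_eq
  refine hg.update (by omega) (fun hs => ?_) (fun hk => ?_)
  · have hstep := hg.entry_step (t - 1) hs (by omega)
    have hne : g (t - 1) ≠ i + 1 := fun h => hi' ⟨hs, by omega, h⟩
    rw [sub_add_cancel] at hstep
    omega
  · have hstep := hg.entry_step t hst hk
    omega

lemma raise_snd (hg : IsColumn ι n s k g) (ha : VectorArrows n i m t v) (hi : 1 ≤ i ∧ i ≤ n)
    (hm : HasEntry s k g v (2 * n - i)) (hi' : ¬HasEntry s k g (v - 1) (2 * n + 1 - m))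
    (hvt : ¬(v = t ∧ HasEntry s k g (v - 1) (i + 1))) :
    IsColumn ι n s k (Function.update g v (2 * n + 1 - m)) := by
  obtain ⟨hsv, hvk, hgv⟩ := hm
  have hheight := hg.height
  have hsource := ha.source_eq
  have hlevel := ha.level_eq
  refine hg.update (by omega) (fun hs => ?_) (fun hk => ?_)
  · have hstep := hg.entry_step (v - 1) hs (by omega)
    have hne : g (v - 1) ≠ 2 * n + 1 - m := fun h => hi' ⟨hs, by omega, h⟩
    have hne' : v = t → g (v - 1) ≠ i + 1 := fun hv h => hvt ⟨hv, hs, by omega, h⟩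
    rw [sub_add_cancel] at hstep
    omega
  · have hstep := hg.entry_step v hsv hk
    omega

lemma lower_fst (hg : IsColumn ι n s k g) (ha : VectorArrows n i m t v) (hi : 1 ≤ i ∧ i ≤ n)
    (hm : HasEntry s k g t (i + 1)) (hi' : ¬HasEntry s k g (t + 1) m)
    (hvt : ¬(v = t ∧ HasEntry s k g (t + 1) (2 * n - i))) :
    IsColumn ι n s k (Function.update g t m) := by
  obtain ⟨hst, htk, hgt⟩ := hm
  have hheight := hg.height
  have hsource := ha.source_eq
  have hlevel := ha.level_eq
  refine hg.update (by omega) (fun hs => ?_) (fun hk => ?_)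
  · have hstep := hg.entry_step (t - 1) hs (by omega)
    rw [sub_add_cancel] at hstep
    omega
  · have hstep := hg.entry_step t hst hk
    have hne : g (t + 1) ≠ m := fun h => hi' ⟨by omega, hk, h⟩
    have hne' : v = t → g (t + 1) ≠ 2 * n - i := fun hv h => hvt ⟨hv, by omega, hk, h⟩
    omega

lemma lower_snd (hg : IsColumn ι n s k g) (ha : VectorArrows n i m t v) (hi : 1 ≤ i ∧ i ≤ n)
    (hm : HasEntry s k g v (2 * n + 1 - m)) (hi' : ¬HasEntry s k g (v + 1) (2 * n - i)) :
    IsColumn ι n s k (Function.update g v (2 * n - i)) := by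
  obtain ⟨hsv, hvk, hgv⟩ := hm
  have hheight := hg.height
  have hsource := ha.source_eq
  refine hg.update (by omega) (fun hs => ?_) (fun hk => ?_)
  · have hstep := hg.entry_step (v - 1) hs (by omega)
    rw [sub_add_cancel] at hstep
    omega
  · have hstep := hg.entry_step v hsv hk
    have hne : g (v + 1) ≠ 2 * n - i := fun h => hi' ⟨by omega, hk, h⟩
    omega

lemma raise_both (hg : IsColumn ι n s k g) (ha : VectorArrows n i m t v) (hn : 3 ≤ n)
    (hi : 1 ≤ i ∧ i ≤ n) (hfst : HasEntry s k g t m) (hfst' : ¬HasEntry s k g (t - 1) (i + 1))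
    (hsnd : HasEntry s k g v (2 * n - i)) (hsnd' : ¬HasEntry s k g (v - 1) (2 * n + 1 - m)) :
    ∃ g', IsColumn ι n s k g' ∧
      colForm ι n s k g' = colForm ι n s k g - mesh ι n i t - mesh ι n i t := by
  have hm := ha.source_eq
  have hvt : v ≠ t := fun hv => by
    have := (hv ▸ hsnd).2.2.symm.trans hfst.2.2
    omega
  have hg₁ := hg.raise_snd ha hi hsnd hsnd' (by tauto)
  set g₁ := Function.update g v (2 * n + 1 - m) with hg₁_def
  have hfst₁ : HasEntry s k g₁ t m := (hasEntry_update_of_ne hvt.symm).mpr hfst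
  have hfst₁' : ¬HasEntry s k g₁ (t - 1) (i + 1) := by
    obtain rfl | hne := eq_or_ne (t - 1) v
    · rintro ⟨-, -, h⟩
      rw [hg₁_def, Function.update_self] at h
      omega
    · rwa [hg₁_def, hasEntry_update_of_ne hne]
  refine ⟨_, hg₁.raise_fst ha hi hfst₁ hfst₁', ?_⟩
  rw [hfst₁.colForm_update (ha.boxD_fst hn hi), hsnd.colForm_update (ha.boxD_snd hn hi)]

lemma exists_raise (hg : IsColumn ι n s k g) (h : IsNode ι n i t) (hn : 3 ≤ n)
    (hadm : Admissible n ι) (hc : 0 < colForm ι n s k g (nodePos ι n i t)) :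
    ∃ g', IsColumn ι n s k g' ∧ colForm ι n s k g' =
      colForm ι n s k g - colForm ι n s k g (nodePos ι n i t) • mesh ι n i t := by
  have hi := h.label
  obtain ⟨m, v, ha⟩ : ∃ m v, VectorArrows n i m t v := ⟨_, _, rfl, rfl⟩
  have hm := ha.source_eq
  rw [hg.colForm_apply h ha hn hadm] at hc ⊢
  obtain ⟨hA, hfst, hfst'⟩ | ⟨hA, -, -⟩ | ⟨hA, hfst⟩ :=
    ite_sub_ite_cases (HasEntry s k g t m) (HasEntry s k g (t - 1) (i + 1)) <;>
  obtain ⟨hB, hsnd, hsnd'⟩ | ⟨hB, -, -⟩ | ⟨hB, -⟩ :=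
    ite_sub_ite_cases (HasEntry s k g v (2 * n - i)) (HasEntry s k g (v - 1) (2 * n + 1 - m)) <;>
  rw [hA, hB] at hc ⊢ <;> norm_num at hc
  · obtain ⟨g', hg', hform⟩ := hg.raise_both ha hn hi hfst hfst' hsnd hsnd'
    exact ⟨g', hg', by rw [hform, add_smul, one_smul, sub_sub]⟩
  · refine ⟨_, hg.raise_fst ha hi hfst hfst', ?_⟩
    rw [add_zero, one_smul, hfst.colForm_update (ha.boxD_fst hn hi)]
  · refine ⟨_, hg.raise_snd ha hi hsnd hsnd' ?_, by
      rw [zero_add, one_smul, hsnd.colForm_update (ha.boxD_snd hn hi)]⟩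
    rintro ⟨hv, hent⟩
    have := (hfst.mpr (hv ▸ hent)).2.2
    have := (hv ▸ hsnd).2.2
    omega

lemma lower_both (hg : IsColumn ι n s k g) (ha : VectorArrows n i m t v) (hn : 3 ≤ n)
    (hi : 1 ≤ i ∧ i ≤ n) (hfst : HasEntry s k g t (i + 1)) (hfst' : ¬HasEntry s k g (t + 1) m)
    (hsnd : HasEntry s k g v (2 * n + 1 - m)) (hsnd' : ¬HasEntry s k g (v + 1) (2 * n - i)) :
    ∃ g', IsColumn ι n s k g' ∧
      colForm ι n s k g' = colForm ι n s k g + mesh ι n i t + mesh ι n i t := by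
  have hm := ha.source_eq
  have hvt : v ≠ t := fun hv => by
    have := (hv ▸ hsnd).2.2.symm.trans hfst.2.2
    omega
  have hg₁ := hg.lower_fst ha hi hfst hfst' (by tauto)
  set g₁ := Function.update g t m with hg₁_def
  have hsnd₁ : HasEntry s k g₁ v (2 * n + 1 - m) := (hasEntry_update_of_ne hvt).mpr hsnd
  have hsnd₁' : ¬HasEntry s k g₁ (v + 1) (2 * n - i) := by
    obtain rfl | hne := eq_or_ne (v + 1) t
    · rintro ⟨-, -, h⟩
      rw [hg₁_def, Function.update_self] at h
      omega
    · rwa [hg₁_def, hasEntry_update_of_ne hne]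
  refine ⟨_, hg₁.lower_snd ha hi hsnd₁ hsnd₁', ?_⟩
  rw [hsnd₁.colForm_update (ha.boxD_snd_symm hn hi), hfst.colForm_update (ha.boxD_fst_symm hn hi),
    sub_neg_eq_add, sub_neg_eq_add]

lemma exists_lower (hg : IsColumn ι n s k g) (h : IsNode ι n i t) (hn : 3 ≤ n)
    (hadm : Admissible n ι) (hc : colForm ι n s k g (nodePos ι n i t) < 0) :
    ∃ g', IsColumn ι n s k g' ∧ colForm ι n s k g' =
      colForm ι n s k g - colForm ι n s k g (nodePos ι n i t) • mesh ι n i (t - 1) := by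
  obtain ⟨r, rfl⟩ : ∃ r, t = r + 1 := ⟨t - 1, by omega⟩
  have hi := h.label
  obtain ⟨m, v, ha⟩ : ∃ m v, VectorArrows n i m r v := ⟨_, _, rfl, rfl⟩
  have hm := ha.source_eq
  have hv := ha.level_eq
  rw [hg.colForm_apply h (v := v + 1) ⟨hm, by omega⟩ hn hadm] at hc ⊢
  simp only [add_sub_cancel_right] at hc ⊢
  obtain ⟨hA, -, -⟩ | ⟨hA, hfst', hfst⟩ | ⟨hA, hfst⟩ :=
    ite_sub_ite_cases (HasEntry s k g (r + 1) m) (HasEntry s k g r (i + 1)) <;>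
  obtain ⟨hB, -, -⟩ | ⟨hB, hsnd', hsnd⟩ | ⟨hB, hsnd⟩ :=
    ite_sub_ite_cases (HasEntry s k g (v + 1) (2 * n - i)) (HasEntry s k g v (2 * n + 1 - m)) <;>
  rw [hA, hB] at hc ⊢ <;> norm_num at hc
  · obtain ⟨g', hg', hform⟩ := hg.lower_both ha hn hi hfst hfst' hsnd hsnd'
    exact ⟨g', hg', by rw [hform, add_smul, neg_one_smul]; abel⟩
  · refine ⟨_, hg.lower_fst ha hi hfst hfst' ?_, ?_⟩
    · rintro ⟨hvr, hent⟩
      have := (hsnd.mp (hvr ▸ hent)).2.2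
      have := (hvr ▸ hfst).2.2
      omega
    · rw [hfst.colForm_update (ha.boxD_fst_symm hn hi), add_zero, neg_one_smul]
  · refine ⟨_, hg.lower_snd ha hi hsnd hsnd', ?_⟩
    rw [hsnd.colForm_update (ha.boxD_snd_symm hn hi), zero_add, neg_one_smul]

end IsColumn

end Closure

/-! ### Spin columns are closed under the operators -/

section SpinClosure

variable {n : ℕ} {ι : ℕ → ℕ} {i m k e : ℕ} {s t u v : ℤ} {g g' : ℤ → ℕ}

/-- The spin column `g'` of height `k + 3` arises from the spin column `g` of height `k + 1` by
inserting `n̄` and `ovl(n-1)` below its top entry. -/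
structure SpinExtension (n : ℕ) (s : ℤ) (k : ℕ) (g g' : ℤ → ℕ) : Prop where
  apply_eq : ∀ L < s + k, g' L = g L
  top : g (s + k) = 0
  apply_fst : g' (s + k) = n + 2
  apply_snd : g' (s + k + 1) = n + 1
  top' : g' (s + k + 2) = 0

namespace IsSpinColumn

lemma hasEntry_cases (hg : IsSpinColumn ι n s k g) (h : HasEntry s k g u e) :
    (u + 1 = s + k ∧ e = 0) ∨ (u + 1 < s + k ∧ n + 1 ≤ e ∧ e ≤ 2 * n) := by
  obtain ⟨hsu, huk, rfl⟩ := h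
  obtain hlt | heq : u + 1 < s + k ∨ u = s + k - 1 := by omega
  · exact .inr ⟨hlt, hg.entry_mem u hsu hlt⟩
  · exact .inl ⟨by omega, heq ▸ hg.top⟩

lemma apply_add_le (hg : IsSpinColumn ι n s k g) {j : ℕ} (hj : j + 1 < k) :
    g (s + j) + j ≤ 2 * n := by
  induction j with
  | zero => simpa using (hg.entry_mem s le_rfl (by omega)).2
  | succ j ih =>
    have hstep := hg.entry_step (s + j) (by omega) (by omega)
    have := ih (by omega)
    rw [Nat.cast_add_one, ← add_assoc s]
    omega

lemma colForm_apply (hg : IsSpinColumn ι n s k g) (h : IsNode ι n i t)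
    (ha : VectorArrows n i m t v) (hn : 3 ≤ n) (hadm : Admissible n ι) (hin : i < n) :
    colForm ι n s k g (nodePos ι n i t) =
      (if HasEntry s k g v (2 * n - i) then 1 else 0) -
        (if HasEntry s k g (v - 1) (2 * n + 1 - m) then 1 else 0) := by
  have hi := h.label
  have hm := ha.source_eq
  have hfst : ¬HasEntry s k g t m := fun hent => by
    have := hg.hasEntry_cases hent
    omega
  have hfst' : ¬HasEntry s k g (t - 1) (i + 1) := fun hent => by
    have := hg.hasEntry_cases hent
    omega
  have hle (L : ℤ) (hL : s ≤ L) (hL' : L < s + k) : g L ≤ 2 * n := by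
    have := hg.hasEntry_cases ⟨hL, hL', rfl⟩
    omega
  have hspin : ¬(i = n ∧ HasEntry s k g t 0) := fun hspin => hin.ne hspin.1
  rw [h.colForm_apply ha hn hadm hle, if_neg hfst, if_neg hfst', if_neg hspin, sub_self, zero_add,
    add_zero]

lemma colForm_apply_self (hg : IsSpinColumn ι n s k g) (h : IsNode ι n n t) (hn : 3 ≤ n)
    (hadm : Admissible n ι) :
    colForm ι n s k g (nodePos ι n n t) =
      (if HasEntry s k g t 0 then 1 else 0) - (if HasEntry s k g (t - 1) (n + 1) then 1 else 0) -
        (if HasEntry s k g (t - 1) (n + 2) then 1 else 0) := by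
  have hfst : ¬HasEntry s k g t (n - 1) := fun hent => by
    have := hg.hasEntry_cases hent
    omega
  have hsnd : ¬HasEntry s k g t (2 * n - n) := fun hent => by
    have := hg.hasEntry_cases hent
    omega
  have hle (L : ℤ) (hL : s ≤ L) (hL' : L < s + k) : g L ≤ 2 * n := by
    have := hg.hasEntry_cases ⟨hL, hL', rfl⟩
    omega
  rw [h.colForm_apply (v := t) ⟨(min_eq_right (by omega)).symm, by omega⟩ hn hadm hle,
    if_neg hfst, if_neg hsnd, show 2 * n + 1 - (n - 1) = n + 2 by omega]
  simp only [true_and]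
  ring

lemma update (hg : IsSpinColumn ι n s k g) (hu : u + 1 < s + k) (he : n + 1 ≤ e ∧ e ≤ 2 * n)
    (hbelow : s ≤ u - 1 → e < g (u - 1)) (habove : g (u + 1) < e) :
    IsSpinColumn ι n s k (Function.update g u e) where
  height := hg.height
  level_even := hg.level_even
  level_odd := hg.level_odd
  top := by
    rw [Function.update_of_ne (by omega), hg.top]
  entry_mem L hL hL' := by
    obtain rfl | hLu := eq_or_ne L u
    · rwa [Function.update_self]
    · rw [Function.update_of_ne hLu]
      exact hg.entry_mem L hL hL'
  entry_step L hL hL' := by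
    obtain rfl | hLu := eq_or_ne L u
    · rwa [Function.update_self, Function.update_of_ne (by omega)]
    obtain rfl | hLu' := eq_or_ne u (L + 1)
    · rw [Function.update_self, Function.update_of_ne hLu]
      simpa using hbelow (by omega)
    · rw [Function.update_of_ne hLu, Function.update_of_ne hLu'.symm]
      exact hg.entry_step L hL hL'

lemma raise_snd (hg : IsSpinColumn ι n s k g) (ha : VectorArrows n i m t v) (hi : 1 ≤ i ∧ i < n)
    (hm : HasEntry s k g v (2 * n - i)) (hi' : ¬HasEntry s k g (v - 1) (2 * n + 1 - m)) :
    IsSpinColumn ι n s k (Function.update g v (2 * n + 1 - m)) := by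
  have hv := hg.hasEntry_cases hm
  obtain ⟨hsv, hvk, hgv⟩ := hm
  have hsource := ha.source_eq
  refine hg.update (by omega) (by omega) (fun hs => ?_) ?_
  · have hstep := hg.entry_step (v - 1) hs (by omega)
    have hne : g (v - 1) ≠ 2 * n + 1 - m := fun h => hi' ⟨hs, by omega, h⟩
    rw [sub_add_cancel] at hstep
    omega
  · have hstep := hg.entry_step v hsv (by omega)
    omega

lemma lower_snd (hg : IsSpinColumn ι n s k g) (ha : VectorArrows n i m t v) (hi : 1 ≤ i ∧ i < n)
    (hm : HasEntry s k g v (2 * n + 1 - m)) (hi' : ¬HasEntry s k g (v + 1) (2 * n - i)) :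
    IsSpinColumn ι n s k (Function.update g v (2 * n - i)) := by
  have hv := hg.hasEntry_cases hm
  obtain ⟨hsv, hvk, hgv⟩ := hm
  have hsource := ha.source_eq
  refine hg.update (by omega) (by omega) (fun hs => ?_) ?_
  · have hstep := hg.entry_step (v - 1) hs (by omega)
    rw [sub_add_cancel] at hstep
    omega
  · have hstep := hg.entry_step v hsv (by omega)
    have hne : g (v + 1) ≠ 2 * n - i := fun h => hi' ⟨by omega, by omega, h⟩
    omega

end IsSpinColumn

namespace SpinExtension

lemma colForm_eq (h : SpinExtension n s k g g') (hn : 3 ≤ n) :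
    colForm ι n s (k + 3) g' = colForm ι n s (k + 1) g - mesh ι n n (s + k) := by
  have hspin := boxD_spin (ι := ι) (L := s + k) hn
  have hlow : colForm ι n s k g' = colForm ι n s k g :=
    colForm_congr fun L _ hL => h.apply_eq L hL
  rw [colForm_add_one, colForm_add_one, colForm_add_one, colForm_add_one, hlow,
    show s + (k + 1 : ℕ) = s + k + 1 by omega, show s + (k + 1 + 1 : ℕ) = s + k + 2 by omega,
    h.top, h.apply_fst, h.apply_snd, h.top']
  linear_combination hspin

lemma isSpinColumn_left (h : SpinExtension n s k g g') (hg' : IsSpinColumn ι n s (k + 3) g') :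
    IsSpinColumn ι n s (k + 1) g where
  height := by
    have := hg'.height
    omega
  level_even hk := hg'.level_even (by omega)
  level_odd hk := hg'.level_odd (by omega)
  top := by
    rw [Nat.cast_add_one, ← add_assoc, add_sub_cancel_right, h.top]
  entry_mem L hL hL' := by
    rw [← h.apply_eq L (by omega)]
    exact hg'.entry_mem L hL (by omega)
  entry_step L hL hL' := by
    obtain hlt | heq : L + 1 < s + k ∨ L + 1 = s + k := by omega
    · rw [← h.apply_eq L (by omega), ← h.apply_eq _ hlt]
      exact hg'.entry_step L hL (by omega)
    · have := hg'.entry_mem L hL (by omega)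
      rw [heq, h.top, ← h.apply_eq L (by omega)]
      omega

lemma isSpinColumn_right (h : SpinExtension n s k g g') (hg : IsSpinColumn ι n s (k + 1) g)
    (hn : 3 ≤ n) (hlast : 1 ≤ k → n + 3 ≤ g (s + k - 1)) : IsSpinColumn ι n s (k + 3) g' where
  height := by
    obtain rfl | hk := Nat.eq_zero_or_pos k
    · omega
    · have hbound := hg.apply_add_le (j := k - 1) (by omega)
      have := hlast hk
      rw [show s + ((k - 1 : ℕ) : ℤ) = s + k - 1 by omega] at hbound
      omega
  level_even hk := hg.level_even (by omega)
  level_odd hk := hg.level_odd (by omega)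
  top := by
    rw [show s + (k + 3 : ℕ) - 1 = s + k + 2 by omega, h.top']
  entry_mem L hL hL' := by
    obtain hlt | rfl | rfl : L < s + k ∨ L = s + k ∨ L = s + k + 1 := by omega
    · rw [h.apply_eq L hlt]
      exact hg.entry_mem L hL (by omega)
    · rw [h.apply_fst]
      omega
    · rw [h.apply_snd]
      omega
  entry_step L hL hL' := by
    obtain hlt | rfl | rfl | rfl :
        L + 1 < s + k ∨ L = s + k - 1 ∨ L = s + k ∨ L = s + k + 1 := by omega
    · rw [h.apply_eq L (by omega), h.apply_eq _ hlt]
      exact hg.entry_step L hL (by omega)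
    · rw [h.apply_eq (s + k - 1) (by omega), sub_add_cancel, h.apply_fst]
      exact hlast (by omega)
    · rw [h.apply_fst, h.apply_snd]
      omega
    · rw [add_assoc, one_add_one_eq_two, h.top', h.apply_snd]
      omega

end SpinExtension

namespace IsSpinColumn

lemma exists_extension (hg : IsSpinColumn ι n s (k + 1) g) : ∃ g', SpinExtension n s k g g' := by
  have htop := hg.top
  rw [Nat.cast_add_one, ← add_assoc, add_sub_cancel_right] at htop
  refine ⟨fun L => if L < s + k then g L else if L = s + k then n + 2 else
    if L = s + k + 1 then n + 1 else 0, ⟨fun L hL => if_pos hL, htop, ?_, ?_, ?_⟩⟩ <;>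
  simp

lemma exists_truncation (hg : IsSpinColumn ι n s k g) (hs : s ≤ u) (huk : u + 1 < s + k)
    (hu : g u = n + 2) (hu' : g (u + 1) = n + 1) :
    ∃ r g', k = r + 3 ∧ u = s + r ∧ SpinExtension n s r g' g := by
  obtain ⟨r, rfl⟩ : ∃ r : ℕ, u = s + r := ⟨(u - s).toNat, by omega⟩
  have hlt := hg.hasEntry_cases ⟨by omega, huk, hu'⟩
  obtain rfl : k = r + 3 := by
    by_contra hk
    have := hg.entry_step (s + r + 1) (by omega) (by omega)
    have := hg.entry_mem (s + r + 1 + 1) (by omega) (by omega)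
    omega
  have htop := hg.top
  rw [show s + (r + 3 : ℕ) - 1 = s + r + 2 by omega] at htop
  exact ⟨r, Function.update g (s + r) 0, rfl, rfl,
    fun L hL => (Function.update_of_ne hL.ne _ _).symm, Function.update_self .., hu, hu', htop⟩

lemma exists_raise_self (hg : IsSpinColumn ι n s k g) (h : IsNode ι n n t) (hn : 3 ≤ n)
    (hadm : Admissible n ι) (hc : 0 < colForm ι n s k g (nodePos ι n n t)) :
    ∃ k' g', IsSpinColumn ι n s k' g' ∧ colForm ι n s k' g' =
      colForm ι n s k g - colForm ι n s k g (nodePos ι n n t) • mesh ι n n t := by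
  rw [hg.colForm_apply_self h hn hadm] at hc ⊢
  by_cases htop : HasEntry s k g t 0
  case neg =>
    rw [if_neg htop] at hc
    split_ifs at hc <;> norm_num at hc
  have hfst : ¬HasEntry s k g (t - 1) (n + 1) := fun hent => by
    rw [if_pos htop, if_pos hent] at hc
    split_ifs at hc <;> norm_num at hc
  have hsnd : ¬HasEntry s k g (t - 1) (n + 2) := fun hent => by
    rw [if_pos htop, if_neg hfst, if_pos hent] at hc
    norm_num at hc
  rw [if_pos htop, if_neg hfst, if_neg hsnd, sub_zero, sub_zero, one_smul]
  have hheight := hg.height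
  obtain ⟨r, rfl⟩ : ∃ r, k = r + 1 := ⟨k - 1, by omega⟩
  obtain rfl : t = s + r := by
    have := hg.hasEntry_cases htop
    omega
  obtain ⟨g', hext⟩ := hg.exists_extension
  refine ⟨_, g', hext.isSpinColumn_right hg hn fun hr => ?_, hext.colForm_eq hn⟩
  have := (hg.entry_mem (s + r - 1) (by omega) (by omega)).1
  have : g (s + r - 1) ≠ n + 1 := fun h => hfst ⟨by omega, by omega, h⟩
  have : g (s + r - 1) ≠ n + 2 := fun h => hsnd ⟨by omega, by omega, h⟩
  omega

lemma exists_lower_self (hg : IsSpinColumn ι n s k g) (h : IsNode ι n n t) (hn : 3 ≤ n)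
    (hadm : Admissible n ι) (hc : colForm ι n s k g (nodePos ι n n t) < 0) :
    ∃ k' g', IsSpinColumn ι n s k' g' ∧ colForm ι n s k' g' =
      colForm ι n s k g - colForm ι n s k g (nodePos ι n n t) • mesh ι n n (t - 1) := by
  rw [hg.colForm_apply_self h hn hadm] at hc ⊢
  obtain ⟨u, rfl⟩ : ∃ u, t = u + 1 := ⟨t - 1, by omega⟩
  rw [add_sub_cancel_right] at hc ⊢
  have hent : HasEntry s k g u (n + 1) ∨ HasEntry s k g u (n + 2) := by
    by_contra! hent
    rw [if_neg hent.1, if_neg hent.2] at hc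
    split_ifs at hc <;> norm_num at hc
  obtain ⟨hsu, huk, hle⟩ : s ≤ u ∧ u + 1 < s + k ∧ g u ≤ n + 2 := by
    rcases hent with hent | hent <;>
    exact ⟨hent.1, by have := hg.hasEntry_cases hent; omega, by have := hent.2.2; omega⟩
  have htop : ¬HasEntry s k g (u + 1) 0 := fun htop => by
    rw [if_pos htop] at hc
    split_ifs at hc with h₁ h₂ <;> norm_num at hc
    have := h₁.2.2.symm.trans h₂.2.2
    omega
  have hcases := hg.hasEntry_cases ⟨by omega, huk, rfl⟩
  have hstep := hg.entry_step u hsu huk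
  obtain ⟨hfst, hsnd⟩ : g u = n + 2 ∧ g (u + 1) = n + 1 := by
    have : g (u + 1) ≠ 0 := fun h0 => htop ⟨by omega, huk, h0⟩
    omega
  obtain ⟨r, g', rfl, rfl, hext⟩ := hg.exists_truncation hsu huk hfst hsnd
  refine ⟨r + 1, g', hext.isSpinColumn_left hg, ?_⟩
  have hne : ¬HasEntry s (r + 3) g (s + r) (n + 1) := fun h => by
    have := h.2.2
    omega
  rw [if_neg htop, if_neg hne, if_pos ⟨hsu, by omega, hfst⟩, hext.colForm_eq hn, zero_sub,
    neg_zero, zero_sub, neg_one_smul, sub_neg_eq_add, sub_add_cancel]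

lemma exists_raise (hg : IsSpinColumn ι n s k g) (h : IsNode ι n i t) (hn : 3 ≤ n)
    (hadm : Admissible n ι) (hc : 0 < colForm ι n s k g (nodePos ι n i t)) :
    ∃ k' g', IsSpinColumn ι n s k' g' ∧ colForm ι n s k' g' =
      colForm ι n s k g - colForm ι n s k g (nodePos ι n i t) • mesh ι n i t := by
  obtain rfl | hin := h.label.2.eq_or_lt
  · exact hg.exists_raise_self h hn hadm hc
  obtain ⟨m, v, ha⟩ : ∃ m v, VectorArrows n i m t v := ⟨_, _, rfl, rfl⟩
  rw [hg.colForm_apply h ha hn hadm hin] at hc ⊢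
  obtain ⟨hB, hsnd, hsnd'⟩ | ⟨hB, -⟩ | ⟨hB, -⟩ := ite_sub_ite_cases (HasEntry s k g v (2 * n - i))
    (HasEntry s k g (v - 1) (2 * n + 1 - m)) <;> rw [hB] at hc ⊢ <;> norm_num at hc
  refine ⟨k, _, hg.raise_snd ha ⟨h.label.1, hin⟩ hsnd hsnd', ?_⟩
  rw [one_smul, hsnd.colForm_update (ha.boxD_snd hn h.label)]

lemma exists_lower (hg : IsSpinColumn ι n s k g) (h : IsNode ι n i t) (hn : 3 ≤ n)
    (hadm : Admissible n ι) (hc : colForm ι n s k g (nodePos ι n i t) < 0) :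
    ∃ k' g', IsSpinColumn ι n s k' g' ∧ colForm ι n s k' g' =
      colForm ι n s k g - colForm ι n s k g (nodePos ι n i t) • mesh ι n i (t - 1) := by
  obtain rfl | hin := h.label.2.eq_or_lt
  · exact hg.exists_lower_self h hn hadm hc
  obtain ⟨r, rfl⟩ : ∃ r, t = r + 1 := ⟨t - 1, by omega⟩
  obtain ⟨m, v, ha⟩ : ∃ m v, VectorArrows n i m r v := ⟨_, _, rfl, rfl⟩
  have hm := ha.source_eq
  have hv := ha.level_eq
  rw [hg.colForm_apply h (v := v + 1) ⟨hm, by omega⟩ hn hadm hin] at hc ⊢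
  simp only [add_sub_cancel_right] at hc ⊢
  obtain ⟨hB, -⟩ | ⟨hB, hsnd', hsnd⟩ | ⟨hB, -⟩ := ite_sub_ite_cases
    (HasEntry s k g (v + 1) (2 * n - i)) (HasEntry s k g v (2 * n + 1 - m)) <;>
    rw [hB] at hc ⊢ <;> norm_num at hc
  refine ⟨k, _, hg.lower_snd ha ⟨h.label.1, hin⟩ hsnd hsnd', ?_⟩
  rw [neg_one_smul, hsnd.colForm_update (ha.boxD_snd_symm hn h.label)]

end IsSpinColumn

end SpinClosure

/-! ### Coordinate forms are columns -/

section Inclusion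

variable {n : ℕ} {ι : ℕ → ℕ} {i k : ℕ} {s t : ℤ} {g : ℤ → ℕ}

lemma colForm_of_apply_eq_sub (hk : k + 2 ≤ n) (hg : ∀ L, s ≤ L → L < s + k → g L = s + k - L) :
    colForm ι n s k g = coord ι n k s := by
  have htel : ∀ j ≤ k, colForm ι n s j g = coord ι n k s - coord ι n (k - j) (s + j) := by
    intro j hj
    induction j with
    | zero => simp [colForm_zero]
    | succ j ih =>
      have hgj : g (s + j) = k - j := by
        have := hg (s + j) (by omega) (by omega)
        omega
      rw [colForm_add_one, ih (by omega), hgj, boxD_of_add_two_le (by omega) (by omega),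
        Nat.sub_sub, Nat.cast_add_one, ← add_assoc]
      abel
  rw [htel k le_rfl, Nat.sub_self, coord_zero, sub_zero]

lemma colForm_one_of_top (htop : g s = 0) : colForm ι n s 1 g = coord ι n n s := by
  rw [colForm_add_one, colForm_zero, Nat.cast_zero, add_zero, zero_add, htop, boxD_zero]

lemma colForm_two_of_top (hn : 3 ≤ n) (hbot : g s = n + 1) (htop : g (s + 1) = 0) :
    colForm ι n s 2 g = coord ι n (n - 1) s := by
  rw [colForm_add_one, colForm_add_one, colForm_zero, Nat.cast_zero, add_zero, zero_add,
    Nat.cast_one, hbot, htop, boxD_add_one hn, boxD_zero, sub_add_cancel]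

lemma IsNode.coord_mem_TabD (h : IsNode ι n i t) (hn : 3 ≤ n) : coord ι n i t ∈ TabD ι n := by
  have hi := h.label
  have hlev := h.level
  obtain hlt | heq | rfl : i + 2 ≤ n ∨ i = n - 1 ∨ n = i := by omega
  · refine mem_TabD_iff.mpr ⟨t, i, fun L => (t + i - L).toNat, .inl ⟨⟨hi.1, hlt⟩, hlev,
      fun L _ _ => ?_, fun L _ _ => ?_⟩, (colForm_of_apply_eq_sub hlt fun L _ _ => ?_).symm⟩ <;>
    omega
  · subst heq
    refine mem_TabD_iff.mpr ⟨t, 2, fun L => if L = t then n + 1 else 0, .inr ⟨by omega,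
      fun _ => hlev, by omega, if_neg (by omega), fun L _ _ => ?_, fun L _ _ => ?_⟩,
      (colForm_two_of_top hn (by simp) (by simp)).symm⟩ <;>
    obtain rfl : L = t := by omega
    · simp only [if_true]
      omega
    · simp
  · exact mem_TabD_iff.mpr ⟨t, 1, fun _ => 0, .inr ⟨by omega, by omega, fun _ => hlev, rfl,
      by omega, by omega⟩, (colForm_one_of_top rfl).symm⟩

lemma Sop_mem_TabD {φ : ℕ → ℚ} (hn : 3 ≤ n) (hadm : Admissible n ι)
    (hA : Adapted n (cartanD n) ι) (hφ : φ ∈ TabD ι n) (hk : 1 ≤ k) :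
    Sop (cartanD n) ι k φ ∈ TabD ι n := by
  obtain ⟨s, r, g, hg, rfl⟩ := mem_TabD_iff.mp hφ
  refine Sop_mem hn hadm hA hφ (fun i t h hc => ?_) (fun i t h hc => ?_) hk <;>
  rcases hg with hg | hg
  · obtain ⟨g', hg', hform⟩ := hg.exists_raise h hn hadm hc
    exact mem_TabD_iff.mpr ⟨s, r, g', .inl hg', hform.symm⟩
  · obtain ⟨r', g', hg', hform⟩ := hg.exists_raise h hn hadm hc
    exact mem_TabD_iff.mpr ⟨s, r', g', .inr hg', hform.symm⟩
  · obtain ⟨g', hg', hform⟩ := hg.exists_lower h hn hadm hc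
    exact mem_TabD_iff.mpr ⟨s, r, g', .inl hg', hform.symm⟩
  · obtain ⟨r', g', hg', hform⟩ := hg.exists_lower h hn hadm hc
    exact mem_TabD_iff.mpr ⟨s, r', g', .inr hg', hform.symm⟩

lemma Xi_subset_TabD (hn : 3 ≤ n) (hadm : Admissible n ι) (hA : Adapted n (cartanD n) ι) :
    Xi (cartanD n) ι ⊆ TabD ι n := fun φ hφ => by
  induction hφ with
  | base k hk =>
    obtain ⟨i, t, h, rfl⟩ := hadm.exists_isNode hk
    exact h.coord_eq ▸ h.coord_mem_TabD hn
  | step k hk φ _ ih => exact Sop_mem_TabD hn hadm hA ih hk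

end Inclusion

/-! ### Reachability of ordinary columns -/

/-- A rank function on the encoded entries of `J_D`, for which the first arrow of each label
(see `VectorArrows`) is longer than the second one. -/
def entryRank (n e : ℕ) : ℕ := if e ≤ n + 1 then 2 * e else e + n + 1

/-- The total weight of the column `g` of levels `s, …, s + k - 1` for the entry weights `w`; the
reachability proofs are by induction on it. -/
noncomputable def columnWeight (w : ℕ → ℕ) (s : ℤ) (k : ℕ) (g : ℤ → ℕ) : ℕ :=
  ∑ L ∈ Finset.Ico s (s + k), w (g L)

section Reachability

variable {n : ℕ} {ι : ℕ → ℕ} {i m k e e' : ℕ} {s u v : ℤ} {g g' : ℤ → ℕ}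

lemma HasEntry.columnWeight_update (h : HasEntry s k g u e) (w : ℕ → ℕ) :
    columnWeight w s k (Function.update g u e') + w e = columnWeight w s k g + w e' :=
  h.sum_update (fun _ => w) e'

lemma HasEntry.columnWeight_update_lt (h : HasEntry s k g u e) {w : ℕ → ℕ} (hw : w e' < w e) :
    columnWeight w s k (Function.update g u e') < columnWeight w s k g := by
  have := h.columnWeight_update (e' := e') w
  omega

lemma entryRank_lt_entryRank (h : e' < e) : entryRank n e' < entryRank n e := by
  unfold entryRank
  split_ifs <;> omega

namespace IsColumn

lemma exists_excited (hg : IsColumn ι n s k g) :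
    (∀ L, s ≤ L → L < s + k → g L = s + k - L) ∨
      ∃ u, s ≤ u ∧ u < s + k ∧ s + k - u < g u ∧ ∀ L, u < L → L < s + k → g L = s + k - L := by
  have hheight := hg.height
  by_cases hall : ∀ L, s ≤ L → L < s + k → g L = s + k - L
  · exact .inl hall
  push Not at hall
  obtain ⟨L₀, hL₀, hL₀', hne₀⟩ := hall
  obtain ⟨u, ⟨hsu, huk, hne⟩, hmax⟩ := Int.exists_greatest_of_bdd
    (P := fun L => s ≤ L ∧ L < s + k ∧ (g L : ℤ) ≠ s + k - L) ⟨s + k, fun L hL => hL.2.1.le⟩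
    ⟨L₀, hL₀, hL₀', hne₀⟩
  have habove (L : ℤ) (hL : u < L) (hL' : L < s + k) : g L = s + k - L := by
    by_contra hneL
    exact hL.not_ge (hmax L ⟨by omega, hL', hneL⟩)
  refine .inr ⟨u, hsu, huk, lt_of_le_of_ne ?_ hne.symm, habove⟩
  obtain hlt | heq : u + 1 < s + k ∨ u = s + k - 1 := by omega
  · have := habove (u + 1) (by omega) hlt
    have := hg.entry_step u hsu hlt
    omega
  · have := hg.entry_mem u hsu huk
    omega

lemma colForm_apply_eq_zero_of_barred (hg : IsColumn ι n s k g) (hn : 3 ≤ n)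
    (hadm : Admissible n ι) (hgu : g u = 2 * n + 1 - i) (hi : 1 ≤ i ∧ i < n)
    (hsu : s ≤ u) (huk : u < s + k) (habove : ∀ L, u < L → L < s + k → g L = s + k - L)
    (h : IsNode ι n i (u + n - 1 - i)) :
    colForm ι n s k g (nodePos ι n i (u + n - 1 - i)) = 0 := by
  have hheight := hg.height
  have ha : VectorArrows n i i (u + n - 1 - i) u := ⟨by omega, by omega⟩
  have hbelow (hs : s ≤ u - 1) : g u < g (u - 1) := by
    have := hg.entry_step (u - 1) hs (by omega)
    rw [sub_add_cancel] at this
    omega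
  have hfst : ¬HasEntry s k g (u + n - 1 - i) i := by
    rintro ⟨-, hlt, heq⟩
    obtain h | h : u + n - 1 - i = u ∨ u < u + n - 1 - i := by omega
    · rw [h] at heq
      omega
    · have := habove _ h hlt
      omega
  have hfst' : ¬HasEntry s k g (u + n - 1 - i - 1) (i + 1) := by
    rintro ⟨hs, hlt, heq⟩
    obtain h | h | h : u + n - 1 - i - 1 = u - 1 ∨ u + n - 1 - i - 1 = u ∨
      u < u + n - 1 - i - 1 := by omega
    · rw [h] at heq hs
      have := hbelow hs
      omega
    · rw [h] at heq
      omega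
    · have := habove _ h hlt
      omega
  have hsnd : ¬HasEntry s k g u (2 * n - i) := fun h => by
    have := h.2.2
    omega
  have hsnd' : ¬HasEntry s k g (u - 1) (2 * n + 1 - i) := fun h => by
    have := hbelow h.1
    have := h.2.2
    omega
  rw [hg.colForm_apply h ha hn hadm, if_neg hfst, if_neg hfst', if_neg hsnd, if_neg hsnd',
    sub_zero, add_zero]

lemma exists_reduction_of_barred (hg : IsColumn ι n s k g) (hn : 3 ≤ n) (hadm : Admissible n ι)
    (hA : Adapted n (cartanD n) ι) (hsu : s ≤ u) (huk : u < s + k) (hgu : n + 2 ≤ g u)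
    (habove : ∀ L, u < L → L < s + k → g L = s + k - L) :
    ∃ g', IsColumn ι n s k g' ∧
      columnWeight (entryRank n) s k g' < columnWeight (entryRank n) s k g ∧
      (colForm ι n s k g' ∈ Xi (cartanD n) ι → colForm ι n s k g ∈ Xi (cartanD n) ι) := by
  have hheight := hg.height
  have hlevel := hg.level
  have hmem := hg.entry_mem u hsu huk
  obtain ⟨i, hi, hin⟩ : ∃ i, g u = 2 * n + 1 - i ∧ 1 ≤ i ∧ i < n := ⟨2 * n + 1 - g u, by omega⟩
  have ha : VectorArrows n i i (u + n - 1 - i) u := ⟨by omega, by omega⟩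
  have hP := PD_le_PD (ι := ι) hn hheight (i := i) (by omega)
  have hnode : IsNode ι n i (u + n - 1 - i) := ⟨by omega, by omega⟩
  have hent : HasEntry s k g u (2 * n + 1 - i) := ⟨hsu, huk, hi⟩
  have hsnd : ¬HasEntry s k g (u + 1) (2 * n - i) := by
    rintro ⟨-, hu, heq⟩
    have := habove _ (by omega) hu
    omega
  refine ⟨_, hg.lower_snd ha (by omega) hent hsnd,
    hent.columnWeight_update_lt (entryRank_lt_entryRank (by omega)), fun hXi => ?_⟩
  rw [hent.colForm_update (ha.boxD_snd_symm hn hnode.label), sub_neg_eq_add] at hXi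
  exact hnode.mem_Xi_of_add_mesh_mem hn hadm hA
    (hg.colForm_apply_eq_zero_of_barred hn hadm hi hin hsu huk habove hnode) hXi

/-- Lowering along the first arrow of `i` and raising along the second one leaves the form of a
column unchanged, but decreases its weight. -/
lemma exists_exchange (hlow : IsColumn ι n s k (Function.update g u m)) (hn : 3 ≤ n)
    (ha : VectorArrows n i m u v) (hi : 1 ≤ i ∧ i ≤ n) (hfst : HasEntry s k g u (i + 1))
    (hsnd : HasEntry s k g v (2 * n - i))
    (hsnd' : ¬HasEntry s k g (v - 1) (2 * n + 1 - m)) :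
    ∃ g', IsColumn ι n s k g' ∧
      columnWeight (entryRank n) s k g' < columnWeight (entryRank n) s k g ∧
      colForm ι n s k g' = colForm ι n s k g := by
  have hm := ha.source_eq
  have hv := ha.level_eq
  have hvu : v ≠ u := fun h => by
    have := (h ▸ hsnd).2.2.symm.trans hfst.2.2
    omega
  have hsnd₁ := (hasEntry_update_of_ne (e' := m) hvu).mpr hsnd
  have hsnd₁' := (hasEntry_update_of_ne (e' := m) (show v - 1 ≠ u by omega)).not.mpr hsnd'
  refine ⟨_, hlow.raise_snd ha hi hsnd₁ hsnd₁' fun h => hvu h.1, ?_, ?_⟩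
  · have hw := hfst.columnWeight_update (e' := m) (entryRank n)
    have hw₁ := hsnd₁.columnWeight_update (e' := 2 * n + 1 - m) (entryRank n)
    have : entryRank n m + entryRank n (2 * n + 1 - m) <
        entryRank n (i + 1) + entryRank n (2 * n - i) := by
      unfold entryRank
      split_ifs <;> omega
    omega
  · rw [hsnd₁.colForm_update (ha.boxD_snd hn hi), hfst.colForm_update (ha.boxD_fst_symm hn hi),
      sub_neg_eq_add, add_sub_cancel_right]

/-- If the entry `i + 1` at level `u` and the entry at level `v - 1` cancel at the node `(i, u)`,
then the latter can be lowered through the preceding node `(i, u - 1)`. -/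
lemma exists_reduction_of_snd (hg : IsColumn ι n s k g) (hn : 3 ≤ n) (hadm : Admissible n ι)
    (hA : Adapted n (cartanD n) ι) (ha : VectorArrows n i m u v) (hi : 1 ≤ i ∧ i ≤ n)
    (hfst : HasEntry s k g u (i + 1)) (hsnd : HasEntry s k g (v - 1) (2 * n + 1 - m))
    (hsnd' : ¬HasEntry s k g v (2 * n - i)) :
    ∃ g', IsColumn ι n s k g' ∧
      columnWeight (entryRank n) s k g' < columnWeight (entryRank n) s k g ∧
      (colForm ι n s k g' ∈ Xi (cartanD n) ι → colForm ι n s k g ∈ Xi (cartanD n) ι) := by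
  have hheight := hg.height
  have hlevel := hg.level
  have hm := ha.source_eq
  have hv := ha.level_eq
  have hs := hsnd.1
  have ha' : VectorArrows n i m (u - 1) (v - 1) := ⟨hm, by omega⟩
  have hP := PD_le_PD (ι := ι) hn hheight hi
  have hnode : IsNode ι n i (u - 1) := ⟨hi, by omega⟩
  refine ⟨_, hg.lower_snd ha' hi hsnd (by rwa [sub_add_cancel]),
    hsnd.columnWeight_update_lt (entryRank_lt_entryRank (by omega)), fun hXi => ?_⟩
  rw [hsnd.colForm_update (ha'.boxD_snd_symm hn hi), sub_neg_eq_add] at hXi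
  refine hnode.mem_Xi_of_add_mesh_mem hn hadm hA ?_ hXi
  have hstep (L : ℤ) (hL : s ≤ L - 1) (hL' : L < s + k) := hg.entry_step (L - 1) hL (by omega)
  simp only [sub_add_cancel] at hstep
  have hmid : n ≤ i + 1 → g (u - 1) = n + 2 := fun hni => by
    have := hsnd.2.2
    rw [show v = u by omega] at this
    omega
  have hvan₁ : ¬HasEntry s k g (u - 1) m := fun h => by
    have := hstep u h.1 hfst.2.1
    have := h.2.2
    have := hfst.2.2
    omega
  have hvan₂ : ¬HasEntry s k g (u - 1 - 1) (i + 1) := fun h => by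
    have := hstep u (by have := h.1; omega) hfst.2.1
    have := hstep (u - 1) h.1 (by have := hfst.2.1; omega)
    have := h.2.2
    have := hfst.2.2
    omega
  have hvan₃ : ¬HasEntry s k g (v - 1) (2 * n - i) := fun h => by
    have := h.2.2.symm.trans hsnd.2.2
    omega
  have hvan₄ : ¬HasEntry s k g (v - 1 - 1) (2 * n + 1 - m) := fun h => by
    have := hstep (v - 1) h.1 hsnd.2.1
    have := h.2.2
    have := hsnd.2.2
    omega
  rw [hg.colForm_apply hnode ha' hn hadm, if_neg hvan₁, if_neg hvan₂, if_neg hvan₃, if_neg hvan₄,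
    sub_zero, add_zero]

lemma exists_reduction_of_unbarred (hg : IsColumn ι n s k g) (hn : 3 ≤ n) (hadm : Admissible n ι)
    (hA : Adapted n (cartanD n) ι) (hsu : s ≤ u) (huk : u < s + k) (hgu : s + k - u < g u)
    (hgu' : g u ≤ n + 1) (habove : u + 1 < s + k → g (u + 1) = s + k - (u + 1)) :
    ∃ g', IsColumn ι n s k g' ∧
      columnWeight (entryRank n) s k g' < columnWeight (entryRank n) s k g ∧
      (colForm ι n s k g' ∈ Xi (cartanD n) ι → colForm ι n s k g ∈ Xi (cartanD n) ι) := by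
  have hheight := hg.height
  have hlevel := hg.level
  obtain ⟨i, hi, hin⟩ : ∃ i, g u = i + 1 ∧ 1 ≤ i ∧ i ≤ n := ⟨g u - 1, by omega⟩
  obtain ⟨m, v, ha⟩ : ∃ m v, VectorArrows n i m u v := ⟨_, _, rfl, rfl⟩
  have hm := ha.source_eq
  have hP := PD_le_PD (ι := ι) hn hheight (i := i) hin
  have hnode : IsNode ι n i u := ⟨hin, by omega⟩
  have hfst : HasEntry s k g u (i + 1) := ⟨hsu, huk, hi⟩
  have hfst' : ¬HasEntry s k g (u + 1) m := by
    rintro ⟨-, hu, heq⟩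
    have := habove hu
    omega
  have hvt : ¬(v = u ∧ HasEntry s k g (u + 1) (2 * n - i)) := by
    rintro ⟨-, -, hu, heq⟩
    have := habove hu
    omega
  have hlow := hg.lower_fst ha hin hfst hfst' hvt
  have hA₀ : ¬HasEntry s k g u m := fun h => by
    have := h.2.2
    omega
  have hA₁ : ¬HasEntry s k g (u - 1) (i + 1) := fun h => by
    have hstep := hg.entry_step (u - 1) h.1 (by omega)
    rw [sub_add_cancel] at hstep
    have := h.2.2
    omega
  have happ := hg.colForm_apply hnode ha hn hadm
  rw [if_neg hA₀, if_neg hA₁, sub_zero, zero_add] at happ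
  obtain ⟨-, hsnd, hsnd'⟩ | ⟨-, hsnd', hsnd⟩ | ⟨hB, -⟩ := ite_sub_ite_cases
    (HasEntry s k g v (2 * n - i)) (HasEntry s k g (v - 1) (2 * n + 1 - m))
  · obtain ⟨g', hg', hw, hform⟩ := hlow.exists_exchange hn ha hin hfst hsnd hsnd'
    exact ⟨g', hg', hw, fun hXi => hform ▸ hXi⟩
  · exact hg.exists_reduction_of_snd hn hadm hA ha hin hfst hsnd hsnd'
  · refine ⟨_, hlow, hfst.columnWeight_update_lt (entryRank_lt_entryRank (by omega)), fun hXi => ?_⟩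
    rw [hfst.colForm_update (ha.boxD_fst_symm hn hin), sub_neg_eq_add] at hXi
    exact hnode.mem_Xi_of_add_mesh_mem hn hadm hA (happ.trans hB) hXi

lemma colForm_mem_Xi (hg : IsColumn ι n s k g) (hn : 3 ≤ n) (hadm : Admissible n ι)
    (hA : Adapted n (cartanD n) ι) : colForm ι n s k g ∈ Xi (cartanD n) ι := by
  induction hw : columnWeight (entryRank n) s k g using Nat.strong_induction_on generalizing g with
  | _ w ih =>
    obtain hall | ⟨u, hsu, huk, hgu, habove⟩ := hg.exists_excited
    · have hheight := hg.height
      rw [colForm_of_apply_eq_sub hheight.2 hall]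
      exact IsNode.coord_mem_Xi ⟨by omega, hg.level⟩ hadm
    · obtain ⟨g', hg', hlt, hXi⟩ : ∃ g', IsColumn ι n s k g' ∧
          columnWeight (entryRank n) s k g' < columnWeight (entryRank n) s k g ∧
            (colForm ι n s k g' ∈ Xi (cartanD n) ι → colForm ι n s k g ∈ Xi (cartanD n) ι) := by
        obtain hbar | hunb : n + 2 ≤ g u ∨ g u ≤ n + 1 := by omega
        · exact hg.exists_reduction_of_barred hn hadm hA hsu huk hbar habove
        · exact hg.exists_reduction_of_unbarred hn hadm hA hsu huk hgu hunb
            (habove _ (by omega))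
      exact hXi (ih _ (hw ▸ hlt) hg' rfl)

end IsColumn

end Reachability

/-! ### Reachability of spin columns -/

section SpinReachability

variable {n : ℕ} {ι : ℕ → ℕ} {i k : ℕ} {s u : ℤ} {g : ℤ → ℕ}

namespace IsSpinColumn

lemma shape_cases (hg : IsSpinColumn ι n s k g) :
    (k = 1 ∨ (k = 2 ∧ g s = n + 1)) ∨
      (∃ u, s ≤ u ∧ u + 1 < s + k ∧ n + 2 ≤ g u ∧ g (u + 1) + 1 < g u) ∨
      ∃ u, s ≤ u ∧ u + 1 < s + k ∧ g u = n + 2 ∧ g (u + 1) = n + 1 := by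
  have hheight := hg.height
  by_cases hbase : k = 1 ∨ (k = 2 ∧ g s = n + 1)
  · exact .inl hbase
  have hmem := hg.entry_mem (s + k - 2) (by omega) (by omega)
  by_cases hlast : g (s + k - 2) = n + 1
  · have hk : 3 ≤ k := by
      by_contra hk
      obtain rfl : k = 2 := by omega
      simp_all
    have hstep := hg.entry_step (s + k - 3) (by omega) (by omega)
    have hnext : s + k - 3 + 1 = s + k - 2 := by ring
    rw [hnext, hlast] at hstep
    obtain hgap | hnogap : n + 3 ≤ g (s + k - 3) ∨ g (s + k - 3) = n + 2 := by omega
    · exact .inr (.inl ⟨s + k - 3, by omega, by omega, by omega, by rw [hnext]; omega⟩)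
    · exact .inr (.inr ⟨s + k - 3, by omega, by omega, hnogap, hnext ▸ hlast⟩)
  · refine .inr (.inl ⟨s + k - 2, by omega, by omega, by omega, ?_⟩)
    rw [show s + k - 2 + 1 = s + k - 1 by ring, hg.top]
    omega

lemma isNode_of_gap (hg : IsSpinColumn ι n s k g) (hn : 3 ≤ n) (hsu : s ≤ u)
    (huk : u + 1 < s + k) (hi : 1 ≤ i ∧ i < n) (hgu : g u = 2 * n + 1 - i)
    (hgap : g (u + 1) + 1 < g u) : IsNode ι n i (u + n - 1 - i) := by
  have heven := hg.level_even
  have hodd := hg.level_odd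
  have hP := PD_fork_bounds (ι := ι) hn
  refine ⟨⟨hi.1, hi.2.le⟩, ?_⟩
  obtain hle | rfl : i ≤ n - 2 ∨ i = n - 1 := by omega
  · have := (PD_le_PD (ι := ι) hn (k := n - 2) (by omega) (i := i) (by omega)).2 hle
    omega
  · have hnext := hg.hasEntry_cases ⟨by omega, huk, rfl⟩
    omega

lemma exists_reduction_of_gap (hg : IsSpinColumn ι n s k g) (hn : 3 ≤ n)
    (hadm : Admissible n ι) (hA : Adapted n (cartanD n) ι) (hsu : s ≤ u) (huk : u + 1 < s + k)
    (hgu : n + 2 ≤ g u) (hgap : g (u + 1) + 1 < g u) :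
    ∃ g', IsSpinColumn ι n s k g' ∧ columnWeight id s k g' < columnWeight id s k g ∧
      (colForm ι n s k g' ∈ Xi (cartanD n) ι → colForm ι n s k g ∈ Xi (cartanD n) ι) := by
  have hmem := hg.entry_mem u hsu huk
  obtain ⟨i, hi, hin⟩ : ∃ i, g u = 2 * n + 1 - i ∧ 1 ≤ i ∧ i < n := ⟨2 * n + 1 - g u, by omega⟩
  have ha : VectorArrows n i i (u + n - 1 - i) u := ⟨by omega, by omega⟩
  have hnode := hg.isNode_of_gap hn hsu huk hin hi hgap
  have hent : HasEntry s k g u (2 * n + 1 - i) := ⟨hsu, by omega, hi⟩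
  have habove : ¬HasEntry s k g (u + 1) (2 * n - i) := fun h => by
    have := h.2.2
    omega
  have hsnd : ¬HasEntry s k g u (2 * n - i) := fun h => by
    have := h.2.2
    omega
  have hsnd' : ¬HasEntry s k g (u - 1) (2 * n + 1 - i) := fun h => by
    have hstep := hg.entry_step (u - 1) h.1 (by omega)
    rw [sub_add_cancel] at hstep
    have := h.2.2
    omega
  have hvan : colForm ι n s k g (nodePos ι n i (u + n - 1 - i)) = 0 := by
    rw [hg.colForm_apply hnode ha hn hadm hin.2, if_neg hsnd, if_neg hsnd', sub_zero]
  refine ⟨_, hg.lower_snd ha hin hent habove,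
    hent.columnWeight_update_lt (by simp only [id]; omega), fun hXi => ?_⟩
  rw [hent.colForm_update (ha.boxD_snd_symm hn hnode.label), sub_neg_eq_add] at hXi
  exact hnode.mem_Xi_of_add_mesh_mem hn hadm hA hvan hXi

lemma exists_reduction_of_pair (hg : IsSpinColumn ι n s k g) (hn : 3 ≤ n)
    (hadm : Admissible n ι) (hA : Adapted n (cartanD n) ι) (hsu : s ≤ u) (huk : u + 1 < s + k)
    (hfst : g u = n + 2) (hsnd : g (u + 1) = n + 1) :
    ∃ k' g', IsSpinColumn ι n s k' g' ∧ columnWeight id s k' g' < columnWeight id s k g ∧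
      (colForm ι n s k' g' ∈ Xi (cartanD n) ι → colForm ι n s k g ∈ Xi (cartanD n) ι) := by
  obtain ⟨r, g', rfl, rfl, hext⟩ := hg.exists_truncation hsu huk hfst hsnd
  have heven := hg.level_even
  have hodd := hg.level_odd
  have hP := PD_fork_bounds (ι := ι) hn
  have hnode : IsNode ι n n (s + r) := ⟨by omega, by omega⟩
  have hlow : columnWeight id s r g' = columnWeight id s r g := Finset.sum_congr rfl fun L hL => by
    rw [hext.apply_eq L (Finset.mem_Ico.mp hL).2]
  refine ⟨r + 1, g', hext.isSpinColumn_left hg, ?_, fun hXi => ?_⟩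
  · simp only [columnWeight, sum_Ico_add_cast_add_one, id] at hlow ⊢
    rw [hlow, hext.top]
    omega
  have htop : ¬HasEntry s (r + 3) g (s + r) 0 := fun h => by
    have := h.2.2
    omega
  have hbelow (hs : s ≤ s + r - 1) : n + 2 < g (s + r - 1) := by
    have hstep := hg.entry_step _ hs (by omega)
    rwa [sub_add_cancel, hfst] at hstep
  have hbelow₁ : ¬HasEntry s (r + 3) g (s + r - 1) (n + 1) := fun h => by
    have := hbelow h.1
    have := h.2.2
    omega
  have hbelow₂ : ¬HasEntry s (r + 3) g (s + r - 1) (n + 2) := fun h =>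
    (hbelow h.1).ne' h.2.2
  have hvan : colForm ι n s (r + 3) g (nodePos ι n n (s + r)) = 0 := by
    rw [hg.colForm_apply_self hnode hn hadm, if_neg htop, if_neg hbelow₁, if_neg hbelow₂,
      sub_zero, sub_zero]
  refine hnode.mem_Xi_of_add_mesh_mem hn hadm hA hvan ?_
  rwa [hext.colForm_eq hn, sub_add_cancel]

lemma colForm_mem_Xi (hg : IsSpinColumn ι n s k g) (hn : 3 ≤ n) (hadm : Admissible n ι)
    (hA : Adapted n (cartanD n) ι) : colForm ι n s k g ∈ Xi (cartanD n) ι := by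
  induction hw : columnWeight id s k g using Nat.strong_induction_on generalizing k g with
  | _ w ih =>
    obtain (rfl | ⟨rfl, hbot⟩) | ⟨u, hsu, huk, hgu, hgap⟩ | ⟨u, hsu, huk, hfst, hsnd⟩ :=
      hg.shape_cases
    · have htop := hg.top
      have hlevel := hg.level_odd rfl
      rw [Nat.cast_one, add_sub_cancel_right] at htop
      rw [colForm_one_of_top htop]
      exact IsNode.coord_mem_Xi ⟨by omega, hlevel⟩ hadm
    · have htop := hg.top
      have hlevel := hg.level_even rfl
      rw [show s + (2 : ℕ) - 1 = s + 1 by omega] at htop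
      rw [colForm_two_of_top hn hbot htop]
      exact IsNode.coord_mem_Xi ⟨by omega, hlevel⟩ hadm
    · obtain ⟨g', hg', hlt, hXi⟩ := hg.exists_reduction_of_gap hn hadm hA hsu huk hgu hgap
      exact hXi (ih _ (hw ▸ hlt) hg' rfl)
    · obtain ⟨k', g', hg', hlt, hXi⟩ := hg.exists_reduction_of_pair hn hadm hA hsu huk hfst hsnd
      exact hXi (ih _ (hw ▸ hlt) hg' rfl)

end IsSpinColumn

end SpinReachability

lemma TabD_subset_Xi {n : ℕ} {ι : ℕ → ℕ} (hn : 3 ≤ n) (hadm : Admissible n ι)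
    (hA : Adapted n (cartanD n) ι) : TabD ι n ⊆ Xi (cartanD n) ι := fun φ hφ => by
  obtain ⟨s, k, g, hg | hg, rfl⟩ := mem_TabD_iff.mp hφ
  · exact hg.colForm_mem_Xi hn hadm hA
  · exact hg.colForm_mem_Xi hn hadm hA

/-- For `n = 3` this is the type `D_3 = A_3` with middle node `1`. -/
theorem XiEqTabD_general (n : ℕ) (hn : 3 ≤ n) (ι : ℕ → ℕ) (hadm : Admissible n ι)
    (hadap : Adapted n (cartanD n) ι) : Xi (cartanD n) ι = TabD ι n :=
  (Xi_subset_TabD hn hadm hadap).antisymm (TabD_subset_Xi hn hadm hadap)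

/-- Theorem 3.5 (type D): for an adapted sequence, `Ξ_ι = Tab_{D,ι}`. -/
theorem XiEqTabD (n : ℕ) (hn : 4 ≤ n) (ι : ℕ → ℕ)
    (hadm : Admissible n ι) (hadap : Adapted n (cartanD n) ι) :
    Xi (cartanD n) ι = TabD ι n :=
  XiEqTabD_general n (by omega) ι hadm hadap
end

section
/- Let A be the Cartan matrix of type A_n (n ≥ 2), B_n (n ≥ 2), C_n (n ≥ 2) or D_n (n ≥ 4), and let ι be an admissible sequence in I = {1,…,n} adapted to A. Then ι satisfies the positivity condition: for every linear form φ = Σ_k φ_k x_k belonging to Ξ_ι and every index k ≥ 1 with k^- = 0, the coefficient φ_k is nonnegative. -/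
/-! Every form in `Ξ_ι` is `x_{k₀} - ∑_m c_m β_m`, where `c` is the dimension vector of a
finite-dimensional representation `V` of the translation quiver of `ι` that satisfies the mesh
relations and embeds into the cofree representation with socle at `k₀`. With `V_in(k)` the sum of
the socle at `k` and of all `V(m)` for arrows `m ⟶ k`, there is a complex
`V(k) ⟶ V_in(k) ⟶ V(k⁻)` with injective first map, and the coefficient `φ_k` of the form is
`dim V_in(k) - dim V(k) - dim V(k⁻)`. If `φ_k > 0`, the kernel of the second map leaves room to
enlarge `V(k)` by `φ_k` dimensions; if `φ_k ≤ 0`, one can remove `-φ_k` dimensions from `V(k⁻)`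
without leaving the image of the second map. These two operations are exactly `S_k`. Where
`k⁻ = 0`, the space `V(k⁻)` vanishes and the injectivity of the first map gives `φ_k ≥ 0`. -/

section LinearAlgebra

variable {K M M₂ : Type*} [Field K] [AddCommGroup M] [Module K M] [AddCommGroup M₂] [Module K M₂]

theorem finrank_sup_span_singleton_of_notMem {X : Submodule K M} [FiniteDimensional K X] {x : M}
    (hx : x ∉ X) : Module.finrank K ↥(X ⊔ K ∙ x) = Module.finrank K X + 1 := by
  have hx0 : x ≠ 0 := fun h => hx (h ▸ X.zero_mem)
  have hinf : X ⊓ K ∙ x = ⊥ := ((Submodule.disjoint_span_singleton' hx0).2 hx).eq_bot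
  have hadd := Submodule.finrank_sup_add_finrank_inf_eq X (K ∙ x)
  rwa [hinf, finrank_bot, add_zero, finrank_span_singleton hx0] at hadd

theorem exists_finrank_eq_between {V W : Submodule K M} [FiniteDimensional K W] (hVW : V ≤ W)
    {N : ℕ} (hV : Module.finrank K V ≤ N) (hW : N ≤ Module.finrank K W) :
    ∃ X, V ≤ X ∧ X ≤ W ∧ Module.finrank K X = N := by
  induction N, hV using Nat.le_induction with
  | base => exact ⟨V, le_rfl, hVW, rfl⟩
  | succ N _ ih =>
    obtain ⟨X, hVX, hXW, rfl⟩ := ih (by omega)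
    have hlt : X < W := lt_of_le_of_ne hXW (by rintro rfl; omega)
    obtain ⟨x, hxW, hxX⟩ := SetLike.exists_of_lt hlt
    have : FiniteDimensional K X := Submodule.finiteDimensional_of_le hXW
    exact ⟨X ⊔ K ∙ x, hVX.trans le_sup_left, sup_le hXW (by simpa using hxW),
      finrank_sup_span_singleton_of_notMem hxX⟩

theorem finrank_map_add_finrank_inf_ker (U : Submodule K M) [FiniteDimensional K U]
    (T : M →ₗ[K] M₂) :
    Module.finrank K (U.map T) + Module.finrank K ↥(U ⊓ LinearMap.ker T) =
      Module.finrank K U := by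
  rw [← LinearMap.finrank_range_add_finrank_ker (T.domRestrict U), LinearMap.range_domRestrict,
    ← Submodule.map_comap_subtype, Submodule.finrank_map_subtype_eq]
  rfl

end LinearAlgebra

/-- A quiver with arrow labels in `Λ`, equipped with a translation `τ` as in a translation
quiver. An arrow is encoded by its target `p` and its label `a ∈ arrows p`, and `dual p a` is the
label of the arrow `τ p ⟶ src p a` that completes `src p a ⟶ p` to a mesh. The label `dual p a`
need not belong to an arrow; this happens where the translate of `p` is missing. -/
structure MeshQuiver (P Λ : Type*) where
  arrows : P → Finset Λ
  src : P → Λ → P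
  τ : P → P
  dual : P → Λ → Λ
  src_dual : ∀ p, ∀ a ∈ arrows p, dual p a ∈ arrows (src p a) → src (src p a) (dual p a) = τ p
  exists_dual_eq :
    ∀ p q, ∀ b ∈ arrows q, src q b = τ p → ∃ a ∈ arrows p, src p a = q ∧ dual p a = b

/-- The `a`-component of a function on words: `shift a f w = f (a :: w)`. -/
def shift (K : Type*) [Field K] {Λ : Type*} (a : Λ) : (List Λ → K) →ₗ[K] List Λ → K :=
  LinearMap.funLeft K K (List.cons a)

@[simp]
theorem shift_apply {K : Type*} [Field K] {Λ : Type*} (a : Λ) (f : List Λ → K) (w : List Λ) :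
    shift K a f w = f (a :: w) := rfl

namespace MeshQuiver

variable {K P Λ : Type*} [Field K] (Q : MeshQuiver P Λ) (S : P → Submodule K K)
  (V V' : P → Submodule K (List Λ → K)) (p : P)

/-- The space `V_in(p) = S p ⊕ ⨁_{a : q ⟶ p} V q`: a tuple `(s, (v_a)_a)` is encoded as the
function on words with value `s` at the empty word and `a`-components `v_a`. -/
def inSpace : Submodule K (List Λ → K) :=
  (S p).comap (LinearMap.proj []) ⊓
    ((⨅ a ∈ Q.arrows p, (V (Q.src p a)).comap (shift K a)) ⊓
      ⨅ a ∉ Q.arrows p, LinearMap.ker (shift K a))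

/-- The mesh map at `p`, which follows every path `τ p ⟶ q ⟶ p` of the mesh and sums up. -/
def meshMap (K : Type*) [Field K] : (List Λ → K) →ₗ[K] List Λ → K :=
  ∑ a ∈ Q.arrows p, shift K (Q.dual p a) ∘ₗ shift K a

/-- `V` is a subrepresentation, satisfying the mesh relations, of the cofree representation of
the quiver with socle `S`. -/
def IsSubrep : Prop := ∀ p, V p ≤ Q.inSpace S V p ⊓ LinearMap.ker (Q.meshMap p K)

variable {Q S V V' p}

theorem mem_inSpace {f : List Λ → K} : f ∈ Q.inSpace S V p ↔
    f [] ∈ S p ∧ (∀ a ∈ Q.arrows p, shift K a f ∈ V (Q.src p a)) ∧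
      ∀ a ∉ Q.arrows p, shift K a f = 0 := by
  simp [inSpace]

theorem meshMap_apply (f : List Λ → K) :
    Q.meshMap p K f = ∑ a ∈ Q.arrows p, shift K (Q.dual p a) (shift K a f) := by
  simp [meshMap]

theorem inSpace_mono (h : V ≤ V') : Q.inSpace S V p ≤ Q.inSpace S V' p := fun _ hf =>
  have ⟨h0, hmem, hzero⟩ := mem_inSpace.1 hf
  mem_inSpace.2 ⟨h0, fun a ha => h _ (hmem a ha), hzero⟩

section Dimension

variable (Q S V p)

/-- The components of a vector of `inSpace`. -/
def components : Q.inSpace S V p →ₗ[K] S p × ((a : Q.arrows p) → V (Q.src p a)) where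
  toFun f := (⟨f.1 [], (mem_inSpace.1 f.2).1⟩,
    fun a => ⟨shift K a.1 f, (mem_inSpace.1 f.2).2.1 a a.2⟩)
  map_add' _ _ := rfl
  map_smul' _ _ := rfl

theorem components_injective : Function.Injective (components Q S V p) := by
  rintro ⟨f, hf⟩ ⟨g, hg⟩ hfg
  obtain ⟨hnil, hcons⟩ := Prod.ext_iff.1 hfg
  refine Subtype.ext (funext fun w => ?_)
  cases w with
  | nil => exact congrArg Subtype.val hnil
  | cons a w =>
    refine congrFun (?_ : shift K a f = shift K a g) w
    by_cases ha : a ∈ Q.arrows p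
    · exact congrArg Subtype.val (congrFun hcons ⟨a, ha⟩)
    · rw [(mem_inSpace.1 hf).2.2 a ha, (mem_inSpace.1 hg).2.2 a ha]

theorem components_surjective : Function.Surjective (components Q S V p) := by
  classical
  rintro ⟨s, v⟩
  let f : List Λ → K
    | [] => s
    | a :: w => if ha : a ∈ Q.arrows p then (v ⟨a, ha⟩).1 w else 0
  have hshift (a) (ha : a ∈ Q.arrows p) : shift K a f = v ⟨a, ha⟩ := by ext w; simp [f, ha]
  have hf : f ∈ Q.inSpace S V p :=
    mem_inSpace.2 ⟨s.2, fun a ha => hshift a ha ▸ (v ⟨a, ha⟩).2, fun a ha => by ext w; simp [f, ha]⟩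
  exact ⟨⟨f, hf⟩, Prod.ext rfl (funext fun a => Subtype.ext (hshift a a.2))⟩

/-- `inSpace` is the direct sum that it encodes. -/
noncomputable def componentsEquiv :
    Q.inSpace S V p ≃ₗ[K] S p × ((a : Q.arrows p) → V (Q.src p a)) :=
  .ofBijective _ ⟨components_injective Q S V p, components_surjective Q S V p⟩

variable [∀ p, FiniteDimensional K (V p)]

instance finiteDimensional_inSpace : FiniteDimensional K (Q.inSpace S V p) :=
  .of_injective _ (components_injective Q S V p)

theorem finrank_inSpace : Module.finrank K (Q.inSpace S V p) =
    Module.finrank K (S p) + ∑ a ∈ Q.arrows p, Module.finrank K (V (Q.src p a)) := by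
  rw [(componentsEquiv Q S V p).finrank_eq, Module.finrank_prod, Module.finrank_pi_fintype,
    Finset.sum_coe_sort (Q.arrows p) fun a => Module.finrank K (V (Q.src p a))]

end Dimension

namespace IsSubrep

theorem le_inSpace (hV : Q.IsSubrep S V) (p : P) : V p ≤ Q.inSpace S V p :=
  (hV p).trans inf_le_left

theorem map_meshMap_le (hV : Q.IsSubrep S V) (p : P) :
    (Q.inSpace S V p).map (Q.meshMap p K) ≤ V (Q.τ p) := by
  rintro _ ⟨f, hf, rfl⟩
  rw [meshMap_apply]
  refine Submodule.sum_mem _ fun a ha => ?_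
  have hsrc := mem_inSpace.1 (hV.le_inSpace _ ((mem_inSpace.1 hf).2.1 a ha))
  by_cases hdual : Q.dual p a ∈ Q.arrows (Q.src p a)
  · exact Q.src_dual p a ha hdual ▸ hsrc.2.1 _ hdual
  · exact hsrc.2.2 _ hdual ▸ zero_mem _

theorem of_le_inSpace (hle : V ≤ V')
    (hV' : ∀ p, V' p ≤ Q.inSpace S V p ⊓ LinearMap.ker (Q.meshMap p K)) :
    Q.IsSubrep S V' :=
  fun p => (hV' p).trans (inf_le_inf_right _ (inSpace_mono hle))

/-- A vector of `V q` is the only nonzero component of some vector of `V_in(p)`, so each component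
that `V q` has in `V (τ p)` already lies in the image of the mesh map at `p`. -/
theorem shift_mem_map_meshMap {q : P} {f : List Λ → K} (hf : f ∈ V q) {b : Λ}
    (hb : b ∈ Q.arrows q) (hsrc : Q.src q b = Q.τ p) :
    shift K b f ∈ (Q.inSpace S V p).map (Q.meshMap p K) := by
  classical
  obtain ⟨a, ha, rfl, rfl⟩ := Q.exists_dual_eq p q b hb hsrc
  let g : Q.inSpace S V p := (componentsEquiv Q S V p).symm (0, Pi.single ⟨a, ha⟩ ⟨f, hf⟩)
  have hg : components Q S V p g = (0, Pi.single ⟨a, ha⟩ ⟨f, hf⟩) :=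
    (componentsEquiv Q S V p).apply_symm_apply _
  have hcomp (c : Q.arrows p) : shift K c.1 g.1 =
      (Pi.single (M := fun c : Q.arrows p => V (Q.src p c)) ⟨a, ha⟩ ⟨f, hf⟩ c).1 :=
    congrArg Subtype.val (congrFun (congrArg Prod.snd hg) c)
  refine ⟨g, g.2, ?_⟩
  rw [meshMap_apply, Finset.sum_eq_single_of_mem a ha, hcomp ⟨a, ha⟩, Pi.single_eq_same]
  intro c hc hca
  rw [hcomp ⟨c, hc⟩, Pi.single_eq_of_ne (by simpa using hca)]
  simp

theorem shrink (hV : Q.IsSubrep S V) (hle : V' ≤ V)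
    (hV' : ∀ q, V' q = V q ∨
      ∃ p, Q.τ p = q ∧ (Q.inSpace S V p).map (Q.meshMap p K) ≤ V' q) :
    Q.IsSubrep S V' := by
  intro p f hf
  obtain ⟨hin, hker⟩ := hV p (hle p hf)
  obtain ⟨hnil, hmem, hzero⟩ := mem_inSpace.1 hin
  refine ⟨mem_inSpace.2 ⟨hnil, fun a ha => ?_, hzero⟩, hker⟩
  obtain hsame | ⟨r, hτ, hr⟩ := hV' (Q.src p a)
  · exact hsame ▸ hmem a ha
  · exact hr (shift_mem_map_meshMap (hle p hf) ha hτ.symm)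

variable [∀ p, FiniteDimensional K (V p)]

theorem finrank_inSpace_le (hV : Q.IsSubrep S V) (p : P) :
    Module.finrank K (Q.inSpace S V p) ≤ Module.finrank K (V (Q.τ p)) +
      Module.finrank K ↥(Q.inSpace S V p ⊓ LinearMap.ker (Q.meshMap p K)) := by
  rw [← finrank_map_add_finrank_inf_ker (Q.inSpace S V p) (Q.meshMap p K)]
  gcongr
  exact Submodule.finrank_mono (hV.map_meshMap_le p)

theorem finrank_map_add_finrank_le (hV : Q.IsSubrep S V) (p : P) :
    Module.finrank K ((Q.inSpace S V p).map (Q.meshMap p K)) + Module.finrank K (V p) ≤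
      Module.finrank K (Q.inSpace S V p) := by
  rw [← finrank_map_add_finrank_inf_ker (Q.inSpace S V p) (Q.meshMap p K)]
  gcongr
  have : FiniteDimensional K ↥(Q.inSpace S V p ⊓ LinearMap.ker (Q.meshMap p K)) :=
    Submodule.finiteDimensional_of_le inf_le_left
  exact Submodule.finrank_mono (hV p)

end IsSubrep

end MeshQuiver

section Positions

variable {n : ℕ} {A : ℕ → ℕ → ℤ} {ι : ℕ → ℕ} {k l m : ℕ}

theorem kplus_spec (h : ∃ l, k < l ∧ ι l = ι k) : k < kplus ι k ∧ ι (kplus ι k) = ι k :=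
  Nat.sInf_mem h

theorem kplus_le (hkl : k < l) (h : ι l = ι k) : kplus ι k ≤ l :=
  Nat.sInf_le ⟨hkl, h⟩

theorem kminus_spec (h : kminus ι k ≠ 0) :
    0 < kminus ι k ∧ kminus ι k < k ∧ ι (kminus ι k) = ι k := by
  refine Nat.sSup_mem (Set.nonempty_iff_ne_empty.2 fun hempty => h ?_)
    ⟨k, fun _ (hl : _ ∧ _ ∧ _) => hl.2.1.le⟩
  exact (congrArg sSup hempty).trans csSup_empty

theorem le_kminus (hl : 0 < l) (hlk : l < k) (h : ι l = ι k) : l ≤ kminus ι k :=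
  le_csSup ⟨k, fun _ (hl : _ ∧ _ ∧ _) => hl.2.1.le⟩ ⟨hl, hlk, h⟩

theorem kplus_kminus (h : kminus ι k ≠ 0) : kplus ι (kminus ι k) = k := by
  obtain ⟨hpos, hlt, heq⟩ := kminus_spec h
  obtain ⟨hlt', heq'⟩ := kplus_spec ⟨k, hlt, heq.symm⟩
  refine (kplus_le hlt heq.symm).antisymm (not_lt.1 fun hlt'' => ?_)
  exact hlt'.not_ge (le_kminus (hpos.trans hlt') hlt'' (heq'.trans heq))

theorem kminus_kplus (hk : k ≠ 0) (h : ∃ l, k < l ∧ ι l = ι k) : kminus ι (kplus ι k) = k := by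
  obtain ⟨hlt, heq⟩ := kplus_spec h
  have hle := le_kminus (Nat.pos_of_ne_zero hk) hlt heq.symm
  obtain ⟨-, hlt', heq'⟩ := kminus_spec (ι := ι) (k := kplus ι k) (by omega)
  refine le_antisymm (not_lt.1 fun hlt'' => ?_) hle
  exact hlt'.not_ge (kplus_le hlt'' (heq'.trans heq))

theorem eq_kplus_iff (hk : k ≠ 0) (h : ∃ l, k < l ∧ ι l = ι k) :
    l = kplus ι k ↔ k = kminus ι l :=
  ⟨fun hl => hl ▸ (kminus_kplus hk h).symm, fun hk' => hk' ▸ (kplus_kminus (hk' ▸ hk)).symm⟩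

/-- The positions `m` with `m < k < m⁺`, that is, those for which `β_m` has an inner term at `k`. -/
noncomputable def straddling (ι : ℕ → ℕ) (k : ℕ) : Finset ℕ := {m ∈ Finset.Ico 1 k | k < kplus ι m}

theorem mem_straddling : m ∈ straddling ι k ↔ (1 ≤ m ∧ m < k) ∧ k < kplus ι m := by
  simp [straddling]

theorem ne_of_mem_straddling (h : m ∈ straddling ι k) : ι m ≠ ι k := fun heq =>
  have ⟨⟨_, hlt⟩, hlt'⟩ := mem_straddling.1 h
  hlt'.not_ge (kplus_le hlt heq.symm)

theorem Admissible.mem_Icc (hadm : Admissible n ι) (hk : 1 ≤ k) : ι k ∈ Set.Icc 1 n :=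
  hadm.1 k hk

theorem Admissible.exists_gt_eq (hadm : Admissible n ι) (hk : 1 ≤ k) :
    ∃ l, k < l ∧ ι l = ι k :=
  hadm.2.2 (ι k) (hadm.1 k hk).1 (hadm.1 k hk).2 (k + 1)

/-- Between `k⁻` and `k` an adjacent letter occurs at most once, so its next occurrence after
`l` lies beyond `k`. -/
theorem Adapted.mem_straddling_of_kminus_mem (hadap : Adapted n A ι) (hadm : Admissible n ι)
    (h : kminus ι k ∈ straddling ι l) (hA : A (ι k) (ι l) ≠ 0) : l ∈ straddling ι k := by
  obtain ⟨⟨hpos, hlt⟩, hlk⟩ := mem_straddling.1 h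
  have hk0 : kminus ι k ≠ 0 := by omega
  obtain ⟨-, -, heq⟩ := kminus_spec hk0
  rw [kplus_kminus hk0] at hlk
  have hne : ι k ≠ ι l := heq ▸ ne_of_mem_straddling h
  have hk := hadm.1 k (by omega)
  have hl := hadm.1 l (by omega)
  obtain ⟨hlt', heq'⟩ := kplus_spec (hadm.exists_gt_eq (by omega : 1 ≤ l))
  refine mem_straddling.2 ⟨⟨by omega, hlk⟩, not_le.1 fun hle => ?_⟩
  refine hadap (ι k) (ι l) hk.1 hk.2 hl.1 hl.2 hne hA l (kplus ι l) (by omega) hlt'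
    (.inr rfl) (.inr heq') (fun j hlj hjl => ⟨fun hjk => ?_, fun hjl' => ?_⟩) heq'.symm
  · have := le_kminus (by omega) (hjl.trans_le hle) hjk
    omega
  · exact hjl.not_ge (kplus_le hlj hjl')

end Positions

section BetaCombinations

variable {n : ℕ} {A : ℕ → ℕ → ℤ} {ι : ℕ → ℕ} {k : ℕ}

theorem beta_apply (A : ℕ → ℕ → ℤ) (hk : k ≠ 0) (h : ∃ l, k < l ∧ ι l = ι k) (l : ℕ) :
    beta A ι k l = (if l = k then 1 else 0) +
      (if k ∈ straddling ι l then (A (ι k) (ι l) : ℚ) else 0) +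
      (if k = kminus ι l then 1 else 0) := by
  simp [beta, xc, mem_straddling, hk, Nat.one_le_iff_ne_zero, eq_kplus_iff hk h]

/-- The linear form `∑_m c_m β_m`, given by its coefficients. As `β_0 = 0` while `kminus` takes the
junk value `0`, this is correct only for `c 0 = 0`. -/
noncomputable def betaCombination (A : ℕ → ℕ → ℤ) (ι : ℕ → ℕ) (c : ℕ → ℚ) (l : ℕ) : ℚ :=
  c l + ∑ m ∈ straddling ι l, A (ι m) (ι l) * c m + c (kminus ι l)

theorem betaCombination_update (A : ℕ → ℕ → ℤ) (hk : k ≠ 0) (h : ∃ l, k < l ∧ ι l = ι k)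
    (c : ℕ → ℚ) (a : ℚ) :
    betaCombination A ι (Function.update c k a) =
      betaCombination A ι c + (a - c k) • beta A ι k := by
  have hupdate (m : ℕ) : Function.update c k a m = c m + if m = k then a - c k else 0 := by
    by_cases hm : m = k <;> simp [hm]
  ext l
  simp only [betaCombination, hupdate, Pi.add_apply, Pi.smul_apply, smul_eq_mul,
    beta_apply A hk h, mul_add, Finset.sum_add_distrib, mul_ite, mul_zero, mul_one,
    Finset.sum_ite_eq', eq_comm (a := k) (b := kminus ι l)]
  split_ifs <;> ring

end BetaCombinations

/-- The off-diagonal part of the axioms of a generalized Cartan matrix with index set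
`{1, …, n}`. -/
structure IsOffDiagCartan (n : ℕ) (A : ℕ → ℕ → ℤ) : Prop where
  nonpos : ∀ i ∈ Set.Icc 1 n, ∀ j ∈ Set.Icc 1 n, i ≠ j → A i j ≤ 0
  zero_symm : ∀ i ∈ Set.Icc 1 n, ∀ j ∈ Set.Icc 1 n, A i j = 0 → A j i = 0

theorem isOffDiagCartan_cartanA (n : ℕ) : IsOffDiagCartan n (cartanA n) := by
  constructor <;> unfold cartanA <;> grind

theorem isOffDiagCartan_cartanB (n : ℕ) : IsOffDiagCartan n (cartanB n) := by
  constructor <;> unfold cartanB <;> grind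

theorem isOffDiagCartan_cartanC (n : ℕ) : IsOffDiagCartan n (cartanC n) := by
  constructor <;> unfold cartanC <;> grind

theorem isOffDiagCartan_cartanD (n : ℕ) : IsOffDiagCartan n (cartanD n) := by
  constructor <;> unfold cartanD <;> grind

theorem mem_Ico_mul_iff {s t v : ℕ} :
    t ∈ Finset.Ico (s * v) ((s + 1) * v) ↔ 0 < v ∧ t / v = s := by
  rw [Finset.mem_Ico]
  constructor
  · rintro ⟨hle, hlt⟩
    exact ⟨Nat.pos_of_ne_zero (by rintro rfl; simp at hlt), Nat.div_eq_of_lt_le hle hlt⟩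
  · rintro ⟨hv, rfl⟩
    exact ⟨Nat.div_mul_le_self t v, (Nat.div_lt_iff_lt_mul hv).1 (Nat.lt_succ_self _)⟩

section AdaptedQuiver

variable {n : ℕ} {A : ℕ → ℕ → ℤ} {ι : ℕ → ℕ}

/-- The labels `⟨m, t⟩` of the arrows of `adaptedQuiver`: a position `m` and an edge `t`. -/
abbrev ArrowLabel : Type := (_ : ℕ) × ℕ

/-- The arrows of `adaptedQuiver` with a given target: the arrow labelled `⟨m, t⟩` starts over the
position `m` and lies on the edge `t` between the fibres of the two letters. -/
noncomputable def adaptedArrows (A : ℕ → ℕ → ℤ) (ι : ℕ → ℕ) (p : ℕ × ℕ) : Finset ArrowLabel :=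
  (straddling ι p.1).sigma fun m =>
    Finset.Ico (p.2 * (A (ι m) (ι p.1)).natAbs) ((p.2 + 1) * (A (ι m) (ι p.1)).natAbs)

theorem mem_adaptedArrows {p : ℕ × ℕ} {a : ArrowLabel} : a ∈ adaptedArrows A ι p ↔
    a.1 ∈ straddling ι p.1 ∧ A (ι a.1) (ι p.1) ≠ 0 ∧
      a.2 / (A (ι a.1) (ι p.1)).natAbs = p.2 := by
  rw [adaptedArrows, Finset.mem_sigma, mem_Ico_mul_iff, Int.natAbs_pos]

/-- The translation quiver of an adapted sequence, unfolded so that a Cartan matrix with arbitrary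
off-diagonal entries becomes simply laced: its vertices are the pairs of a position of `ι` and a
point of the fibre `ℕ` over that position. The fibres over the letters `i` and `j` are joined by
one edge for every `t : ℕ`, with ends `t / |a_{j,i}|` over `i` and `t / |a_{i,j}|` over `j`, so
that every point over `j` has `|a_{i,j}|` neighbours over `i`. -/
noncomputable def adaptedQuiver (hA : IsOffDiagCartan n A) (hadm : Admissible n ι)
    (hadap : Adapted n A ι) : MeshQuiver (ℕ × ℕ) ArrowLabel where
  arrows := adaptedArrows A ι
  src p a := (a.1, a.2 / (A (ι p.1) (ι a.1)).natAbs)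
  τ p := (kminus ι p.1, p.2)
  dual p a := ⟨kminus ι p.1, a.2⟩
  src_dual p a ha hdual := by
    have hpos := (mem_straddling.1 (mem_adaptedArrows.1 hdual).1).1.1
    refine Prod.ext rfl ?_
    simpa only [(kminus_spec (Nat.ne_of_gt hpos)).2.2] using (mem_adaptedArrows.1 ha).2.2
  exists_dual_eq := by
    rintro ⟨k, s⟩ ⟨l, r⟩ ⟨m, t⟩ hb hsrc
    obtain ⟨rfl, hs⟩ : m = kminus ι k ∧ t / (A (ι l) (ι m)).natAbs = s := Prod.ext_iff.1 hsrc
    obtain ⟨hstr, hne, hr⟩ := mem_adaptedArrows.1 hb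
    obtain ⟨⟨hpos, -⟩, -⟩ := mem_straddling.1 hstr
    obtain ⟨-, -, heq⟩ := kminus_spec (Nat.ne_of_gt hpos)
    simp only [heq] at hs hne hr
    have hl := hadap.mem_straddling_of_kminus_mem hadm hstr hne
    refine ⟨⟨l, t⟩, mem_adaptedArrows.2 ⟨hl, fun hzero => hne ?_, hs⟩, Prod.ext rfl hr, rfl⟩
    obtain ⟨⟨hl1, hlk⟩, -⟩ := mem_straddling.1 hl
    exact hA.zero_symm _ (hadm.mem_Icc hl1) _ (hadm.mem_Icc (hl1.trans hlk.le)) hzero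

/-- The socle of the cofree representation that corresponds to the form `x_k`. -/
def socle (k : ℕ) (p : ℕ × ℕ) : Submodule ℚ ℚ := if p.1 = k then ⊤ else ⊥

theorem finrank_socle (k : ℕ) (p : ℕ × ℕ) :
    Module.finrank ℚ (socle k p) = if p.1 = k then 1 else 0 := by
  rw [socle, apply_ite fun W : Submodule ℚ ℚ => Module.finrank ℚ W, finrank_top, finrank_bot,
    Module.finrank_self]

/-- `c` is the dimension vector of `V`, which is constant along the fibres over the positions. -/
structure HasDim (V : ℕ × ℕ → Submodule ℚ (List ArrowLabel → ℚ)) (c : ℕ → ℕ) : Prop where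
  finiteDimensional : ∀ p, FiniteDimensional ℚ (V p)
  finrank_eq : ∀ p, Module.finrank ℚ (V p) = c p.1

/-- The dimension over the position `k` of `inSpace` for a representation with socle `socle k₀`
and dimension vector `c`. -/
noncomputable def inDim (A : ℕ → ℕ → ℤ) (ι : ℕ → ℕ) (k₀ : ℕ) (c : ℕ → ℕ) (k : ℕ) : ℕ :=
  (if k = k₀ then 1 else 0) + ∑ m ∈ straddling ι k, (A (ι m) (ι k)).natAbs * c m

theorem xc_sub_betaCombination_apply (hA : IsOffDiagCartan n A) (hadm : Admissible n ι) (k₀ : ℕ)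
    (c : ℕ → ℕ) {k : ℕ} (hk : 1 ≤ k) :
    (xc k₀ - betaCombination A ι (Nat.cast ∘ c)) k =
      inDim A ι k₀ c k - c k - c (kminus ι k) := by
  have hsum : ∑ m ∈ straddling ι k, (A (ι m) (ι k) : ℚ) * c m =
      -∑ m ∈ straddling ι k, ((A (ι m) (ι k)).natAbs : ℚ) * c m := by
    rw [← Finset.sum_neg_distrib]
    refine Finset.sum_congr rfl fun m hm => ?_
    have hle := hA.nonpos _ (hadm.mem_Icc (mem_straddling.1 hm).1.1) _ (hadm.mem_Icc hk)
      (ne_of_mem_straddling hm)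
    rw [Nat.cast_natAbs, abs_of_nonpos hle]
    push_cast
    ring
  simp only [Pi.sub_apply, xc, betaCombination, Function.comp_apply, hsum, inDim]
  push_cast
  ring

theorem xc_sub_betaCombination_sub_smul_beta (hadm : Admissible n ι) (k₀ : ℕ) {c : ℕ → ℕ}
    {k N : ℕ} (hk : 1 ≤ k) {a : ℚ} (hN : N = c k + a) :
    xc k₀ - betaCombination A ι (Nat.cast ∘ c) - a • beta A ι k =
      xc k₀ - betaCombination A ι (Nat.cast ∘ Function.update c k N) := by
  rw [Function.comp_update, betaCombination_update A (Nat.ne_of_gt hk) (hadm.exists_gt_eq hk), hN,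
    Function.comp_apply, add_sub_cancel_left, sub_sub]

section Subrepresentations

variable {hA : IsOffDiagCartan n A} {hadm : Admissible n ι} {hadap : Adapted n A ι} {k₀ : ℕ}
  {V : ℕ × ℕ → Submodule ℚ (List ArrowLabel → ℚ)} {c : ℕ → ℕ}

theorem HasDim.finrank_inSpace (hc : HasDim V c) (p : ℕ × ℕ) :
    Module.finrank ℚ ((adaptedQuiver hA hadm hadap).inSpace (socle k₀) V p) =
      inDim A ι k₀ c p.1 := by
  have := hc.finiteDimensional
  rw [MeshQuiver.finrank_inSpace, finrank_socle, inDim]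
  simp only [hc.finrank_eq]
  simp only [adaptedQuiver, adaptedArrows, Finset.sum_sigma, Finset.sum_const,
    Nat.card_Ico, smul_eq_mul, Nat.succ_mul, Nat.add_sub_cancel_left]

theorem HasDim.le_inDim (hc : HasDim V c)
    (hV : (adaptedQuiver hA hadm hadap).IsSubrep (socle k₀) V) (k : ℕ) :
    c k ≤ inDim A ι k₀ c k := by
  have := hc.finiteDimensional
  have hle := Submodule.finrank_mono (hV.le_inSpace (k, 0))
  rwa [hc.finrank_inSpace, hc.finrank_eq] at hle

theorem HasDim.apply_zero (hc : HasDim V c)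
    (hV : (adaptedQuiver hA hadm hadap).IsSubrep (socle k₀) V) (hk₀ : k₀ ≠ 0) : c 0 = 0 := by
  have h := hc.le_inDim hV 0
  have hzero : straddling ι 0 = ∅ := rfl
  simpa [inDim, hk₀.symm, hzero] using h

/-- `V` with the spaces over the position `k` replaced by the spaces `X s`. -/
noncomputable def replaceFibre (V : ℕ × ℕ → Submodule ℚ (List ArrowLabel → ℚ)) (k : ℕ)
    (X : ℕ → Submodule ℚ (List ArrowLabel → ℚ)) (p : ℕ × ℕ) : Submodule ℚ (List ArrowLabel → ℚ) :=
  if p.1 = k then X p.2 else V p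

theorem forall_replaceFibre {R : ℕ × ℕ → Submodule ℚ (List ArrowLabel → ℚ) → Prop} {k : ℕ}
    {X : ℕ → Submodule ℚ (List ArrowLabel → ℚ)} (hX : ∀ s, R (k, s) (X s))
    (hV : ∀ p, p.1 ≠ k → R p (V p)) (p : ℕ × ℕ) : R p (replaceFibre V k X p) := by
  obtain ⟨l, s⟩ := p
  by_cases h : l = k
  · subst h
    simpa [replaceFibre] using hX s
  · simpa [replaceFibre, h] using hV (l, s) h

theorem HasDim.update (hc : HasDim V c) {k N : ℕ}
    {X : ℕ → Submodule ℚ (List ArrowLabel → ℚ)} (hfin : ∀ s, FiniteDimensional ℚ (X s))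
    (hX : ∀ s, Module.finrank ℚ (X s) = N) :
    HasDim (replaceFibre V k X) (Function.update c k N) where
  finiteDimensional := forall_replaceFibre (R := fun _ W => FiniteDimensional ℚ W) hfin
    fun p _ => hc.finiteDimensional p
  finrank_eq := forall_replaceFibre
    (R := fun p W => Module.finrank ℚ W = Function.update c k N p.1)
    (fun s => by rw [hX, Function.update_self])
    fun p hp => by rw [hc.finrank_eq, Function.update_of_ne hp]

theorem HasDim.exists_enlarge (hc : HasDim V c)
    (hV : (adaptedQuiver hA hadm hadap).IsSubrep (socle k₀) V) {k N : ℕ} (hle : c k ≤ N)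
    (hN : N + c (kminus ι k) ≤ inDim A ι k₀ c k) :
    ∃ V', (adaptedQuiver hA hadm hadap).IsSubrep (socle k₀) V' ∧
      HasDim V' (Function.update c k N) := by
  have := hc.finiteDimensional
  have hX (s : ℕ) : ∃ X, V (k, s) ≤ X ∧
      X ≤ (adaptedQuiver hA hadm hadap).inSpace (socle k₀) V (k, s) ⊓
        LinearMap.ker ((adaptedQuiver hA hadm hadap).meshMap (k, s) ℚ) ∧
      Module.finrank ℚ X = N := by
    have hker := hV.finrank_inSpace_le (k, s)
    rw [hc.finrank_inSpace, hc.finrank_eq] at hker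
    exact exists_finrank_eq_between (hV (k, s)) ((hc.finrank_eq (k, s)).trans_le hle)
      (Nat.le_of_add_le_add_left ((add_comm _ N).trans_le (hN.trans hker)))
  choose X hVX hXle hdim using hX
  refine ⟨replaceFibre V k X, MeshQuiver.IsSubrep.of_le_inSpace (V := V) ?_ ?_,
    hc.update (fun s => ?_) hdim⟩
  · exact forall_replaceFibre (R := fun p W => V p ≤ W) hVX fun _ _ => le_rfl
  · exact forall_replaceFibre (R := fun p W => W ≤ _ ⊓ LinearMap.ker (MeshQuiver.meshMap _ p _))
      hXle fun p _ => hV p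
  · exact Submodule.finiteDimensional_of_le (hXle s)

theorem HasDim.exists_shrink (hc : HasDim V c)
    (hV : (adaptedQuiver hA hadm hadap).IsSubrep (socle k₀) V) {k N : ℕ}
    (hle : N ≤ c (kminus ι k)) (hN : inDim A ι k₀ c k ≤ N + c k) :
    ∃ V', (adaptedQuiver hA hadm hadap).IsSubrep (socle k₀) V' ∧
      HasDim V' (Function.update c (kminus ι k) N) := by
  have := hc.finiteDimensional
  have hX (s : ℕ) : ∃ X, ((adaptedQuiver hA hadm hadap).inSpace (socle k₀) V (k, s)).map
        ((adaptedQuiver hA hadm hadap).meshMap (k, s) ℚ) ≤ X ∧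
      X ≤ V (kminus ι k, s) ∧ Module.finrank ℚ X = N := by
    have himage := hV.finrank_map_add_finrank_le (k, s)
    rw [hc.finrank_inSpace, hc.finrank_eq] at himage
    exact exists_finrank_eq_between (hV.map_meshMap_le (k, s))
      (Nat.le_of_add_le_add_right (himage.trans hN))
      (hle.trans_eq (hc.finrank_eq (kminus ι k, s)).symm)
  choose X hmap hXV hdim using hX
  refine ⟨replaceFibre V (kminus ι k) X, hV.shrink ?_ ?_, hc.update (fun s => ?_) hdim⟩
  · exact forall_replaceFibre (R := fun p W => W ≤ V p) hXV fun _ _ => le_rfl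
  · exact forall_replaceFibre
      (R := fun q W => W = V q ∨ ∃ p, (adaptedQuiver hA hadm hadap).τ p = q ∧
        ((adaptedQuiver hA hadm hadap).inSpace (socle k₀) V p).map
          ((adaptedQuiver hA hadm hadap).meshMap p ℚ) ≤ W)
      (fun s => .inr ⟨(k, s), rfl, hmap s⟩) fun _ _ => .inl rfl
  · exact Submodule.finiteDimensional_of_le (hXV s)

end Subrepresentations

/-- The forms `x_{k₀} - ∑_m c_m β_m` for which `c` is the dimension vector of a subrepresentation
of the cofree representation with socle at `k₀`. -/
def IsRealizable (hA : IsOffDiagCartan n A) (hadm : Admissible n ι) (hadap : Adapted n A ι)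
    (φ : ℕ → ℚ) : Prop :=
  ∃ k₀ ≠ 0, ∃ c V, (adaptedQuiver hA hadm hadap).IsSubrep (socle k₀) V ∧ HasDim V c ∧
    φ = xc k₀ - betaCombination A ι (Nat.cast ∘ c)

namespace IsRealizable

variable (hA : IsOffDiagCartan n A) (hadm : Admissible n ι) (hadap : Adapted n A ι)

theorem xc {k : ℕ} (hk : k ≠ 0) : IsRealizable hA hadm hadap (xc k) := by
  refine ⟨k, hk, 0, fun _ => ⊥, fun _ => bot_le, ⟨fun _ => inferInstance, fun _ => ?_⟩, ?_⟩
  · exact finrank_bot ..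
  · ext l
    simp [betaCombination]

variable {hA hadm hadap} {φ : ℕ → ℚ} {k : ℕ}

theorem nonneg_of_kminus_eq_zero (h : IsRealizable hA hadm hadap φ) (hk : 1 ≤ k)
    (hmin : kminus ι k = 0) : 0 ≤ φ k := by
  obtain ⟨k₀, hk₀, c, V, hV, hc, rfl⟩ := h
  rw [xc_sub_betaCombination_apply hA hadm k₀ c hk, hmin, hc.apply_zero hV hk₀,
    Nat.cast_zero, sub_zero, sub_nonneg]
  exact_mod_cast hc.le_inDim hV k

theorem sop (h : IsRealizable hA hadm hadap φ) (hk : 1 ≤ k) :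
    IsRealizable hA hadm hadap (Sop A ι k φ) := by
  obtain ⟨k₀, hk₀, c, V, hV, hc, rfl⟩ := h
  have hφk := xc_sub_betaCombination_apply hA hadm k₀ c hk
  set φ := _root_.xc k₀ - betaCombination A ι (Nat.cast ∘ c)
  unfold Sop
  split_ifs with hpos
  · have hlt : c k + c (kminus ι k) < inDim A ι k₀ c k := by
      rw [hφk] at hpos
      exact_mod_cast (by linarith : (c k + c (kminus ι k) : ℚ) < inDim A ι k₀ c k)
    obtain ⟨N, hN⟩ := Nat.exists_eq_add_of_le' (show c (kminus ι k) ≤ inDim A ι k₀ c k by omega)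
    obtain ⟨V', hV', hc'⟩ := hc.exists_enlarge hV (k := k) (N := N) (by omega) hN.ge
    exact ⟨k₀, hk₀, _, V', hV', hc',
      xc_sub_betaCombination_sub_smul_beta hadm k₀ hk (by rw [hφk, hN]; push_cast; ring)⟩
  · obtain hmin | hmin := eq_or_ne (kminus ι k) 0
    · rw [hmin, beta, if_pos rfl, smul_zero, sub_zero]
      exact ⟨k₀, hk₀, c, V, hV, hc, rfl⟩
    have hle : inDim A ι k₀ c k ≤ c (kminus ι k) + c k := by
      rw [hφk] at hpos
      exact_mod_cast (by linarith : (inDim A ι k₀ c k : ℚ) ≤ c (kminus ι k) + c k)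
    obtain ⟨N, hN⟩ := Nat.exists_eq_add_of_le' (hc.le_inDim hV k)
    obtain ⟨V', hV', hc'⟩ := hc.exists_shrink hV (k := k) (N := N) (by omega) hN.le
    exact ⟨k₀, hk₀, _, V', hV', hc',
      xc_sub_betaCombination_sub_smul_beta hadm k₀ (Nat.one_le_iff_ne_zero.2 hmin)
        (by rw [hφk, hN]; push_cast; ring)⟩

end IsRealizable

end AdaptedQuiver

theorem adapted_positivity_general (n : ℕ) (A : ℕ → ℕ → ℤ) (hA : IsOffDiagCartan n A)
    (ι : ℕ → ℕ) (hadm : Admissible n ι) (hadap : Adapted n A ι) :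
    ∀ φ ∈ Xi A ι, ∀ k, 1 ≤ k → kminus ι k = 0 → 0 ≤ φ k := by
  intro φ hφ k hk hmin
  suffices IsRealizable hA hadm hadap φ from this.nonneg_of_kminus_eq_zero hk hmin
  induction hφ with
  | base j hj => exact .xc hA hadm hadap (Nat.ne_of_gt hj)
  | step j hj ψ _ ih => exact ih.sop hj

/-- Theorem 3.6: an adapted sequence of type A, B, C (n ≥ 2) or D (n ≥ 4) satisfies the
positivity condition: the coefficient `φ_k` of every `φ ∈ Ξ_ι` is nonnegative whenever
`k^- = 0`. -/
theorem adapted_positivity (n : ℕ) (A : ℕ → ℕ → ℤ)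
    (hA : (2 ≤ n ∧ (A = cartanA n ∨ A = cartanB n ∨ A = cartanC n)) ∨
          (4 ≤ n ∧ A = cartanD n))
    (ι : ℕ → ℕ) (hadm : Admissible n ι) (hadap : Adapted n A ι) :
    ∀ φ ∈ Xi A ι, ∀ k, 1 ≤ k → kminus ι k = 0 → 0 ≤ φ k := by
  refine adapted_positivity_general n A ?_ ι hadm hadap
  obtain ⟨-, rfl | rfl | rfl⟩ | ⟨-, rfl⟩ := hA
  exacts [isOffDiagCartan_cartanA n, isOffDiagCartan_cartanB n, isOffDiagCartan_cartanC n,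
    isOffDiagCartan_cartanD n]
end

section
/- Let n ≥ 2, A the Cartan matrix of type A_n, and ι an admissible sequence adapted to A. Then for all 1 ≤ j ≤ n and all integers s ≥ 1 − P(j), the type A boxes satisfy the identity B^A_s(j+1) = B^A_s(j) − β_{s+P(j), j}. -/
/-!
The key is the expansion of `β_{s,j}` in double-indexed coordinates,
`β_{s,j} = x_{s,j} + ∑_{i ≠ j} a_{j,i} x_{s+p_{i,j},i} + x_{s+1,j}`,
valid for every matrix to which `ι` is adapted: between the `s`-th and the `(s+1)`-st occurrence of
`j`, a letter `i` with `a_{j,i} ≠ 0` occurs exactly once, and alternation forces this to be its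
`(s+p_{i,j})`-th occurrence. In type `A` only `i = j ± 1` survive, and their shifts become those of
the boxes because `P(j+1) = P(j) + p_{j+1,j}` and `p_{j-1,j} + p_{j,j-1} = 1`.
-/

open Filter

/-- The letters `i` and `j` alternate in `ι` (from position `1` on): two consecutive members of the
subsequence of their occurrences are distinct. This is the condition which `Adapted` imposes on the
pairs with `a_{i,j} ≠ 0`. -/
def Alternates (ι : ℕ → ℕ) (i j : ℕ) : Prop :=
  ∀ k l, 1 ≤ k → k < l → (ι k = i ∨ ι k = j) → (ι l = i ∨ ι l = j) →
    (∀ m, k < m → m < l → ι m ≠ i ∧ ι m ≠ j) → ι k ≠ ι l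

section Occurrences

variable {ι : ℕ → ℕ} {i j : ℕ}

theorem occPos_succ_mem (hj : ∃ᶠ k in atTop, ι k = j) (m : ℕ) :
    occPos ι j m < occPos ι j (m + 1) ∧ ι (occPos ι j (m + 1)) = j :=
  Nat.sInf_mem (s := {k | occPos ι j m < k ∧ ι k = j})
    (frequently_atTop'.1 hj (occPos ι j m))

theorem occPos_lt_succ (hj : ∃ᶠ k in atTop, ι k = j) (m : ℕ) :
    occPos ι j m < occPos ι j (m + 1) :=
  (occPos_succ_mem hj m).1

theorem apply_occPos (hj : ∃ᶠ k in atTop, ι k = j) {m : ℕ} (hm : 1 ≤ m) :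
    ι (occPos ι j m) = j := by
  obtain ⟨m, rfl⟩ := Nat.exists_eq_add_of_le' hm
  exact (occPos_succ_mem hj m).2

theorem occPos_pos (hj : ∃ᶠ k in atTop, ι k = j) {m : ℕ} (hm : 1 ≤ m) :
    0 < occPos ι j m := by
  obtain ⟨m, rfl⟩ := Nat.exists_eq_add_of_le' hm
  exact Nat.zero_lt_of_lt (occPos_lt_succ hj m)

theorem occPos_succ_le_s7 {m q : ℕ} (hlt : occPos ι j m < q) (hq : ι q = j) :
    occPos ι j (m + 1) ≤ q :=
  Nat.sInf_le ⟨hlt, hq⟩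

theorem apply_ne_of_mem_Ioo_occPos {m q : ℕ}
    (hq : q ∈ Finset.Ioo (occPos ι j m) (occPos ι j (m + 1))) : ι q ≠ j := by
  rw [Finset.mem_Ioo] at hq
  exact fun h => (occPos_succ_le_s7 hq.1 h).not_gt hq.2

theorem eq_occPos_succ {m q : ℕ} (hlt : occPos ι j m < q) (hgt : q < occPos ι j (m + 2))
    (hq : ι q = j) : q = occPos ι j (m + 1) := by
  refine le_antisymm (not_lt.1 fun h => ?_) (occPos_succ_le_s7 hlt hq)
  exact apply_ne_of_mem_Ioo_occPos (Finset.mem_Ioo.2 ⟨h, hgt⟩) hq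

theorem kplus_occPos (hj : ∃ᶠ k in atTop, ι k = j) {m : ℕ} (hm : 1 ≤ m) :
    kplus ι (occPos ι j m) = occPos ι j (m + 1) := by
  rw [kplus, apply_occPos hj hm, occPos]

theorem firstOcc_eq_occPos_one (ι : ℕ → ℕ) (i : ℕ) : firstOcc ι i = occPos ι i 1 := rfl

theorem firstOcc_ne (hi : ∃ᶠ k in atTop, ι k = i) (hj : ∃ᶠ k in atTop, ι k = j) (hij : i ≠ j) :
    firstOcc ι i ≠ firstOcc ι j := by
  intro h
  apply hij
  rw [← apply_occPos hi le_rfl, ← firstOcc_eq_occPos_one, h, firstOcc_eq_occPos_one,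
    apply_occPos hj le_rfl]

theorem pval_add_pval_swap (hi : ∃ᶠ k in atTop, ι k = i) (hj : ∃ᶠ k in atTop, ι k = j)
    (hij : i ≠ j) : pval ι i j + pval ι j i = 1 := by
  have hne := firstOcc_ne hi hj hij
  unfold pval
  split_ifs <;> omega

end Occurrences

namespace Alternates

variable {ι : ℕ → ℕ} {i j : ℕ}

theorem symm (h : Alternates ι i j) : Alternates ι j i :=
  fun k l hk hkl hιk hιl hgap => h k l hk hkl hιk.symm hιl.symm fun m hkm hml =>
    (hgap m hkm hml).symm

theorem exists_mem_Ioo_occPos (h : Alternates ι i j) (hj : ∃ᶠ k in atTop, ι k = j) {m : ℕ}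
    (hm : 1 ≤ m) : ∃ q ∈ Finset.Ioo (occPos ι j m) (occPos ι j (m + 1)), ι q = i := by
  have hletter := apply_occPos hj hm
  have hletter' := apply_occPos hj (Nat.le_add_left 1 m)
  by_contra! hgap
  refine h _ _ (occPos_pos hj hm) (occPos_lt_succ hj m) (.inr hletter) (.inr hletter') ?_
    (hletter.trans hletter'.symm)
  intro q hlt hgt
  have hq := Finset.mem_Ioo.2 ⟨hlt, hgt⟩
  exact ⟨hgap q hq, apply_ne_of_mem_Ioo_occPos hq⟩

theorem occPos_succ_lt (h : Alternates ι i j) (hj : ∃ᶠ k in atTop, ι k = j) {m r : ℕ}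
    (hm : 1 ≤ m) (hlt : occPos ι i r < occPos ι j m) :
    occPos ι i (r + 1) < occPos ι j (m + 1) := by
  obtain ⟨q, hq, hqi⟩ := h.exists_mem_Ioo_occPos hj hm
  rw [Finset.mem_Ioo] at hq
  exact (occPos_succ_le_s7 (hlt.trans hq.1) hqi).trans_lt hq.2

theorem occPos_interlace (h : Alternates ι i j) (hi : ∃ᶠ k in atTop, ι k = i)
    (hj : ∃ᶠ k in atTop, ι k = j) (hij : i ≠ j) (m : ℕ) :
    occPos ι i (m + pval ι i j) < occPos ι j (m + 1) ∧
      occPos ι j (m + 1) < occPos ι i (m + pval ι i j + 1) := by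
  induction m with
  | zero =>
    rw [Nat.zero_add, pval]
    split_ifs with hfirst
    · exact ⟨hfirst, h.symm.occPos_succ_lt hi le_rfl (occPos_pos hi le_rfl)⟩
    · exact ⟨occPos_pos hj le_rfl, (firstOcc_ne hi hj hij).symm.lt_of_le (not_lt.1 hfirst)⟩
  | succ m ih =>
    rw [Nat.add_right_comm m 1 (pval ι i j)]
    have hleft := h.occPos_succ_lt hj (Nat.le_add_left 1 m) ih.1
    exact ⟨hleft, h.symm.occPos_succ_lt hi (Nat.le_add_left 1 _) ih.2⟩

theorem filter_Ioo_occPos (h : Alternates ι i j) (hi : ∃ᶠ k in atTop, ι k = i)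
    (hj : ∃ᶠ k in atTop, ι k = j) (hij : i ≠ j) {m : ℕ} (hm : 1 ≤ m) :
    {q ∈ Finset.Ioo (occPos ι j m) (occPos ι j (m + 1)) | ι q = i} =
      {occPos ι i (m + pval ι i j)} := by
  obtain ⟨m, rfl⟩ := Nat.exists_eq_add_of_le' hm
  obtain ⟨hprev, hleft⟩ := h.occPos_interlace hi hj hij m
  obtain ⟨hright, hnext⟩ := h.occPos_interlace hi hj hij (m + 1)
  rw [Nat.add_right_comm m 1 (pval ι i j)] at hright hnext ⊢
  ext q
  simp only [Finset.mem_filter, Finset.mem_Ioo, Finset.mem_singleton]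
  constructor
  · rintro ⟨⟨hlt, hgt⟩, hq⟩
    exact eq_occPos_succ (hprev.trans hlt) (hgt.trans hnext) hq
  · rintro rfl
    exact ⟨⟨hleft, hright⟩, apply_occPos hi (Nat.le_add_left 1 _)⟩

end Alternates

theorem Admissible.frequently_eq {n : ℕ} {ι : ℕ → ℕ} (hadm : Admissible n ι) {i : ℕ}
    (hi : 1 ≤ i) (hin : i ≤ n) : ∃ᶠ k in atTop, ι k = i :=
  frequently_atTop.2 (hadm.2.2 i hi hin)

theorem Adapted.alternates {n : ℕ} {A : ℕ → ℕ → ℤ} {ι : ℕ → ℕ} (hadap : Adapted n A ι)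
    {i j : ℕ} (hi : 1 ≤ i) (hin : i ≤ n) (hj : 1 ≤ j) (hjn : j ≤ n) (hij : i ≠ j)
    (hA : A i j ≠ 0) : Alternates ι i j :=
  hadap i j hi hin hj hjn hij hA

section Coordinates

variable {n : ℕ} {ι : ℕ → ℕ} {j : ℕ}

theorem xsj_natCast (ι : ℕ → ℕ) (hj : 1 ≤ j) (hjn : j ≤ n) {m : ℕ} (hm : 1 ≤ m) :
    xsj ι n m j = xc (occPos ι j m) := by
  rw [xsj, if_pos ⟨mod_cast hm, hj, hjn⟩, Int.toNat_natCast]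

theorem xsj_eq_zero (ι : ℕ → ℕ) (s : ℤ) (h : ¬(1 ≤ j ∧ j ≤ n)) : xsj ι n s j = 0 :=
  if_neg fun h' => h h'.2

theorem xsj_congr {s t : ℤ} (h : 1 ≤ j → j ≤ n → s = t) : xsj ι n s j = xsj ι n t j := by
  by_cases hj : 1 ≤ j ∧ j ≤ n
  · rw [h hj.1 hj.2]
  · rw [xsj_eq_zero ι s hj, xsj_eq_zero ι t hj]

theorem sum_filter_Ioo_occPos_smul_xc {A : ℕ → ℕ → ℤ} (hadm : Admissible n ι)
    (hadap : Adapted n A ι) {i : ℕ} (hi : 1 ≤ i) (hin : i ≤ n) (hj : 1 ≤ j) (hjn : j ≤ n)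
    (hij : i ≠ j) {m : ℕ} (hm : 1 ≤ m) :
    ∑ q ∈ Finset.Ioo (occPos ι j m) (occPos ι j (m + 1)) with ι q = i, (A j (ι q) : ℚ) • xc q =
      (A j i : ℚ) • xsj ι n (m + pval ι i j) i := by
  have hfiber : ∀ q ∈ {q ∈ Finset.Ioo (occPos ι j m) (occPos ι j (m + 1)) | ι q = i},
      (A j (ι q) : ℚ) • xc q = (A j i : ℚ) • xc q := fun q hq => by
    rw [(Finset.mem_filter.1 hq).2]
  rw [Finset.sum_congr rfl hfiber, ← Finset.smul_sum]
  by_cases hA : A j i = 0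
  · rw [hA, Int.cast_zero, zero_smul, zero_smul]
  have halt : Alternates ι i j := (hadap.alternates hj hjn hi hin hij.symm hA).symm
  rw [halt.filter_Ioo_occPos (hadm.frequently_eq hi hin) (hadm.frequently_eq hj hjn) hij hm,
    Finset.sum_singleton, ← Nat.cast_add, xsj_natCast ι hi hin (Nat.le_add_right_of_le hm)]

theorem betasj_eq_sum {A : ℕ → ℕ → ℤ} (hadm : Admissible n ι) (hadap : Adapted n A ι)
    (hj : 1 ≤ j) (hjn : j ≤ n) {s : ℤ} (hs : 1 ≤ s) :
    betasj A ι s j =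
      xsj ι n s j
        + ∑ i ∈ (Finset.Icc 1 n).erase j, (A j i : ℚ) • xsj ι n (s + pval ι i j) i
        + xsj ι n (s + 1) j := by
  lift s to ℕ using by omega with m
  have hm : 1 ≤ m := mod_cast hs
  have hfreq := hadm.frequently_eq hj hjn
  have hmaps : ∀ q ∈ Finset.Ioo (occPos ι j m) (occPos ι j (m + 1)),
      ι q ∈ (Finset.Icc 1 n).erase j := fun q hq =>
    Finset.mem_erase.2 ⟨apply_ne_of_mem_Ioo_occPos hq,
      Finset.mem_Icc.2 (hadm.1 q (Nat.one_le_of_lt (Finset.mem_Ioo.1 hq).1))⟩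
  have hsum : ∑ q ∈ Finset.Ioo (occPos ι j m) (occPos ι j (m + 1)), (A j (ι q) : ℚ) • xc q =
      ∑ i ∈ (Finset.Icc 1 n).erase j, (A j i : ℚ) • xsj ι n (m + pval ι i j) i := by
    rw [← Finset.sum_fiberwise_of_maps_to hmaps]
    refine Finset.sum_congr rfl fun i hi => ?_
    rw [Finset.mem_erase, Finset.mem_Icc] at hi
    exact sum_filter_Ioo_occPos_smul_xc hadm hadap hi.2.1 hi.2.2 hj hjn hi.1 hm
  rw [betasj, Int.toNat_natCast, beta, if_neg (occPos_pos hfreq hm).ne', kplus_occPos hfreq hm,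
    apply_occPos hfreq hm, hsum, xsj_natCast ι hj hjn hm, ← Nat.cast_succ,
    xsj_natCast ι hj hjn (Nat.le_add_left 1 m)]

end Coordinates

section TypeA

variable {n : ℕ} {ι : ℕ → ℕ} {j : ℕ}

theorem sum_cartanA_smul {R M : Type*} [Ring R] [AddCommGroup M] [Module R M] (f : ℕ → M)
    (hj : 1 ≤ j) (hjn : j ≤ n) (hf_zero : f 0 = 0) (hf_succ : f (n + 1) = 0) :
    ∑ i ∈ (Finset.Icc 1 n).erase j, (cartanA n j i : R) • f i = -f (j - 1) - f (j + 1) := by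
  have hwiden : (Finset.Icc 1 n).erase j ⊆ (Finset.range (n + 2)).erase j := by
    intro i hi
    simp only [Finset.mem_erase, Finset.mem_Icc, Finset.mem_range] at hi ⊢
    omega
  have hneighbours : {j - 1, j + 1} ⊆ (Finset.range (n + 2)).erase j := by
    intro i hi
    simp only [Finset.mem_insert, Finset.mem_singleton, Finset.mem_erase, Finset.mem_range] at hi ⊢
    omega
  have hentry_pred : cartanA n j (j - 1) = -1 := by
    rw [cartanA, if_neg (by omega), if_pos (by omega)]
  have hentry_succ : cartanA n j (j + 1) = -1 := by
    rw [cartanA, if_neg (by omega), if_pos (by omega)]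
  rw [Finset.sum_subset hwiden, ← Finset.sum_subset hneighbours,
    Finset.sum_pair (by omega), hentry_pred, hentry_succ]
  · simp only [Int.cast_neg, Int.cast_one, neg_smul, one_smul, sub_eq_add_neg]
  · intro i hi hi'
    simp only [Finset.mem_insert, Finset.mem_singleton, Finset.mem_erase] at hi hi'
    rw [cartanA, if_neg hi.1.symm, if_neg (by omega), Int.cast_zero, zero_smul]
  · intro i hi hi'
    simp only [Finset.mem_erase, Finset.mem_Icc, Finset.mem_range] at hi hi'
    obtain rfl | rfl : i = 0 ∨ i = n + 1 := by omega
    · rw [hf_zero, smul_zero]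
    · rw [hf_succ, smul_zero]

theorem PABC_succ (ι : ℕ → ℕ) (hj : 1 ≤ j) (hjn : j + 1 ≤ n) :
    PABC ι n (j + 1) = PABC ι n j + pval ι (j + 1) j := by
  rw [PABC, PABC, if_pos hjn, if_pos (Nat.le_of_succ_le hjn),
    Finset.sum_Icc_succ_top (Nat.succ_le_succ hj), Nat.add_sub_cancel]

theorem PABC_succ_add_pval (hfreq : ∃ᶠ k in atTop, ι k = j)
    (hfreq_succ : ∃ᶠ k in atTop, ι k = j + 1) (hj : 1 ≤ j) (hjn : j + 1 ≤ n) :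
    PABC ι n (j + 1) + pval ι j (j + 1) = PABC ι n j + 1 := by
  rw [PABC_succ ι hj hjn, add_assoc, pval_add_pval_swap hfreq_succ hfreq (Nat.succ_ne_self j)]

theorem betasj_cartanA_eq (hadm : Admissible n ι) (hadap : Adapted n (cartanA n) ι)
    (hj : 1 ≤ j) (hjn : j ≤ n) {s : ℤ} (hs : 1 ≤ s) :
    betasj (cartanA n) ι s j =
      xsj ι n s j - xsj ι n (s + pval ι (j - 1) j) (j - 1)
        - xsj ι n (s + pval ι (j + 1) j) (j + 1) + xsj ι n (s + 1) j := by
  rw [betasj_eq_sum hadm hadap hj hjn hs,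
    sum_cartanA_smul (fun i => xsj ι n (s + pval ι i j) i) hj hjn
      (xsj_eq_zero ι _ (by omega)) (xsj_eq_zero ι _ (by omega))]
  abel

end TypeA

/-- Lemma 3.3 (i): the type A box relation
`B^A_s(j+1) = B^A_s(j) - β_{s+P(j),j}` for `1 ≤ j ≤ n` and `s ≥ 1 - P(j)`. -/
theorem boxA_rel (n : ℕ) (hn : 2 ≤ n) (ι : ℕ → ℕ)
    (hadm : Admissible n ι) (hadap : Adapted n (cartanA n) ι) :
    ∀ (j : ℕ) (s : ℤ), 1 ≤ j → j ≤ n → 1 - (PABC ι n j : ℤ) ≤ s →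
      boxA ι n s (j + 1) =
        boxA ι n s j - betasj (cartanA n) ι (s + (PABC ι n j : ℤ)) j := by
  intro j s hj hjn hs
  have hright : xsj ι n (s + PABC ι n j + pval ι (j + 1) j) (j + 1) =
      xsj ι n (s + PABC ι n (j + 1)) (j + 1) :=
    xsj_congr fun _ hsucc => by rw [PABC_succ ι hj hsucc, Nat.cast_add, add_assoc]
  have hleft : xsj ι n (s + PABC ι n j + pval ι (j - 1) j) (j - 1) =
      xsj ι n (s + PABC ι n (j - 1) + 1) (j - 1) := by
    obtain ⟨i, rfl⟩ := Nat.exists_eq_add_of_le' hj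
    rw [Nat.add_sub_cancel]
    exact xsj_congr fun hi _ => by
      have := PABC_succ_add_pval (hadm.frequently_eq hi (Nat.le_of_succ_le hjn))
        (hadm.frequently_eq hj hjn) hi hjn
      omega
  rw [betasj_cartanA_eq hadm hadap hj hjn (by omega), hleft, hright, boxA, boxA,
    Nat.add_sub_cancel]
  abel
end
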